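/- arXiv:2304.07798 — 2 statements merged into one kernel-verified Lean document; each statement's English description precedes it below -/
import Mathlib

section
/- Assume G is an elementary abelian 2-group and the characteristic of F is 2. Then there is a surjective F-algebra homomorphism from the Terwilliger F-algebra T onto M₅(F) × M₄(F) × F whose kernel K is a nilpotent two-sided ideal of T (there exists m ≥ 1 such that any product of m elements of K equals the zero matrix). Consequently T/Rad T ≅ M₅(F) ⊕ M₄(F) ⊕ M₁(F) as F-algebras, where Rad T = K is the Jacobson radical of T. -/
open Matrix

abbrev XG (G : Type) [Group G] : Type := {v : Fin 3 → G // v 0 * v 1 = v 2}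

def cIdx : Fin 5 → Fin 3
  | 0 => 0
  | 1 => 0
  | 2 => 1
  | 3 => 2
  | 4 => 0

def rel {G : Type} [Group G] (i : Fin 5) (y z : XG G) : Prop :=
  if i = 0 then y = z
  else if i = 4 then ∀ d : Fin 3, y.1 d ≠ z.1 d
  else y ≠ z ∧ y.1 (cIdx i) = z.1 (cIdx i)

instance {G : Type} [Group G] [DecidableEq G] (i : Fin 5) (y z : XG G) :
    Decidable (rel i y z) := by
  unfold rel
  infer_instance

def Adj (F : Type) [Field F] {G : Type} [Group G] [DecidableEq G] (i : Fin 5) :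
    Matrix (XG G) (XG G) F :=
  Matrix.of fun y z => if rel i y z then 1 else 0

def DualE (F : Type) [Field F] {G : Type} [Group G] [DecidableEq G] (x : XG G) (i : Fin 5) :
    Matrix (XG G) (XG G) F :=
  Matrix.of fun y z => if y = z ∧ rel i x y then 1 else 0

def AllOne (F : Type) [Field F] (G : Type) [Group G] : Matrix (XG G) (XG G) F :=
  Matrix.of fun _ _ => 1

def genSet (F : Type) [Field F] (G : Type) [Group G] [Fintype G] [DecidableEq G]
    (x : XG G) : Set (Matrix (XG G) (XG G) F) :=
  {M | ∃ a b c : Fin 5, M = DualE F x a * Adj F b * DualE F x c}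

def TerwilligerAlg (F : Type) [Field F] (G : Type) [Group G] [Fintype G] [DecidableEq G]
    (x : XG G) : Subalgebra F (Matrix (XG G) (XG G) F) :=
  Algebra.adjoin F (genSet F G x)

/-! Let `E` be the projection onto the points related to the base point by `R_4`, let `U` have the
indicators of the five blocks around the base point as columns, and let `W` have as columns the
indicators of the fibres of the three coordinates on these blocks, centred by the matrix
`K = 1 - J`. As `n - 1 = 1` in `F`, the matrix `K` is idempotent, and the Terwilliger algebra is
the space of all `c E + U α Uᵀ + W (β ⊗ K) Wᵀ`. Since `Uᵀ W = 0`, the coordinates `(c, α)` and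
`(c, β)` multiply as in two Munn algebras extended by `E`, with sandwich matrices `Uᵀ U`, which
is `diag(1, 1, 1, 1, 0)`, and the coefficient of `K` in `Wᵀ W`, which is the direct sum of `1`
and `J - 1` of size `3`. In characteristic `2` these have ranks `4` and `3 + 2 = 5`. A Munn
algebra maps onto the full matrix algebra of the rank of its sandwich matrix `S`, and the kernel
consists of the `A` with `S A S = 0`, so that the product of any three elements of the kernel
vanishes. -/

namespace TerwilligerAlg

open scoped Kronecker

section Lifting

variable {R N A B : Type*} [CommRing R] [AddCommGroup N] [Module R N] [Ring A] [Algebra R A]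
  [Ring B] [Algebra R B]

theorem exists_algHom_of_ker_le (T : Subalgebra R A) (p : N →ₗ[R] A) (q : N →ₗ[R] B)
    (mul : N → N → N) (hT : Subalgebra.toSubmodule T = LinearMap.range p)
    (hp : ∀ a b, p (mul a b) = p a * p b) (hq : ∀ a b, q (mul a b) = q a * q b)
    (hker : LinearMap.ker p ≤ LinearMap.ker q) (hsurj : Function.Surjective q) :
    ∃ φ : T →ₐ[R] B, Function.Surjective φ ∧ ∀ (a : N) (t : T), p a = t → φ t = q a := by
  have mem_iff (t : A) : t ∈ T ↔ ∃ a, p a = t := by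
    rw [← Subalgebra.mem_toSubmodule, hT, LinearMap.mem_range]
  have q_congr {a b : N} (h : p a = p b) : q a = q b := LinearMap.sub_mem_ker_iff.1 <|
    hker (LinearMap.sub_mem_ker_iff.2 h)
  choose s hs using fun t : T => (mem_iff t).1 t.2
  let f : T →ₗ[R] B :=
    { toFun t := q (s t)
      map_add' t t' := by rw [← map_add]; exact q_congr (by simp [hs])
      map_smul' r t := by rw [RingHom.id_apply, ← map_smul]; exact q_congr (by simp [hs]) }
  have f_mul (t t' : T) : f (t * t') = f t * f t' :=
    (q_congr (by simp [hs, hp])).trans (hq _ _)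
  have f_eq (a : N) (t : T) (h : p a = t) : f t = q a := q_congr ((hs t).trans h.symm)
  have f_surj : Function.Surjective f := fun b => by
    obtain ⟨a, rfl⟩ := hsurj b
    exact ⟨⟨p a, (mem_iff _).2 ⟨a, rfl⟩⟩, f_eq a _ rfl⟩
  -- A multiplicative surjection preserves the unit.
  have f_one : f 1 = 1 := by
    obtain ⟨t, ht⟩ := f_surj 1
    simpa [ht] using (f_mul 1 t).symm
  exact ⟨AlgHom.ofLinearMap f f_one f_mul, f_surj, f_eq⟩

end Lifting

section Munn

variable {R ι κ : Type*} [CommRing R] [Fintype ι] [Fintype κ]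

/-- The matrix component of the product of `(c, A)` and `(c', A')` in the Munn algebra with sandwich
matrix `S`, extended by an idempotent `e` that acts on matrices through `P`; here `(c, A)` stands
for `c e + A`. -/
def munnMul (P S : Matrix ι ι R) (c c' : R) (A A' : Matrix ι ι R) : Matrix ι ι R :=
  c • (P * A') + c' • (A * P) + A * S * A'

lemma mul_munnMul_mul {X : Type*} [Fintype X] {P S : Matrix ι ι R} {E : Matrix X X R}
    {B : Matrix X ι R} {B' : Matrix ι X R} (hEB : E * B = B * P) (hBE : B' * E = P * B')
    (hS : B' * B = S) (c c' : R) (A A' : Matrix ι ι R) :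
    B * munnMul P S c c' A A' * B' =
      c • (E * (B * A' * B')) + c' • (B * A * B' * E) + B * A * B' * (B * A' * B') := by
  have left : B * (P * A') * B' = E * (B * A' * B') := by
    simp only [← Matrix.mul_assoc, hEB]
  have right : B * (A * P) * B' = B * A * B' * E := by
    simp only [Matrix.mul_assoc, hBE]
  have both : B * (A * S * A') * B' = B * A * B' * (B * A' * B') := by
    simp only [← hS, Matrix.mul_assoc]
  simp only [munnMul, Matrix.mul_add, Matrix.add_mul, Matrix.mul_smul, Matrix.smul_mul, left, right,
    both]

lemma munnMul_kronecker {H : Type*} [Fintype H] [DecidableEq H] {K : Matrix H H R}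
    (hK : K * K = K) (P S : Matrix ι ι R) (c c' : R) (A A' : Matrix ι ι R) :
    munnMul (P ⊗ₖ (1 : Matrix H H R)) (S ⊗ₖ K) c c' (A ⊗ₖ K) (A' ⊗ₖ K) =
      munnMul P S c c' A A' ⊗ₖ K := by
  simp only [munnMul, ← Matrix.mul_kronecker_mul, Matrix.one_mul, Matrix.mul_one, hK,
    Matrix.add_kronecker, Matrix.smul_kronecker]

/-- A rank factorization `S = C * D` of a sandwich matrix, together with one-sided inverses of its
factors and an idempotent `Q` through which `P` acts on both of them. It is what turns the extended
Munn algebra of `munnMul P S` into a full matrix algebra indexed by `κ`, see `rep`. -/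
structure MunnFactorization [DecidableEq κ] (P S : Matrix ι ι R) where
  C : Matrix ι κ R
  D : Matrix κ ι R
  L : Matrix κ ι R
  M : Matrix ι κ R
  Q : Matrix κ κ R
  C_mul_D : C * D = S
  L_mul_C : L * C = 1
  D_mul_M : D * M = 1
  P_mul_C : P * C = C * Q
  D_mul_P : D * P = Q * D
  Q_mul_Q : Q * Q = Q

namespace MunnFactorization

variable [DecidableEq κ] {P S : Matrix ι ι R} (f : MunnFactorization (κ := κ) P S)

/-- The representation `(c, A) ↦ c • Q + D * A * C` of the extended Munn algebra. -/
def rep (c : R) (A : Matrix ι ι R) : Matrix κ κ R := c • f.Q + f.D * A * f.C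

lemma rep_munnMul (c c' : R) (A A' : Matrix ι ι R) :
    f.rep (c * c') (munnMul P S c c' A A') = f.rep c A * f.rep c' A' := by
  rw [rep, mul_munnMul_mul f.D_mul_P.symm f.P_mul_C.symm f.C_mul_D]
  simp only [rep, Matrix.add_mul, Matrix.mul_add, Matrix.smul_mul, Matrix.mul_smul, smul_add,
    smul_smul, mul_comm c' c, f.Q_mul_Q]
  abel

lemma exists_rep_eq (c : R) (Y : Matrix κ κ R) : ∃ A, f.rep c A = Y := by
  refine ⟨f.M * (Y - c • f.Q) * f.L, ?_⟩
  have : f.D * (f.M * (Y - c • f.Q) * f.L) * f.C =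
      f.D * f.M * (Y - c • f.Q) * (f.L * f.C) := by simp only [Matrix.mul_assoc]
  rw [rep, this, f.D_mul_M, f.L_mul_C]
  simp

lemma C_mul_rep_mul_D (c : R) (A : Matrix ι ι R) :
    f.C * f.rep c A * f.D = c • (S * P) + S * A * S := by
  simp only [rep, Matrix.mul_add, Matrix.add_mul, Matrix.mul_smul, Matrix.smul_mul, ← f.C_mul_D,
    Matrix.mul_assoc, f.D_mul_P]

lemma rep_eq_zero_iff (c : R) (A : Matrix ι ι R) :
    f.rep c A = 0 ↔ c • (S * P) + S * A * S = 0 := by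
  rw [← f.C_mul_rep_mul_D]
  refine ⟨fun h => by simp [h], fun h => ?_⟩
  calc f.rep c A = f.L * f.C * f.rep c A * (f.D * f.M) := by simp [f.L_mul_C, f.D_mul_M]
    _ = f.L * (f.C * f.rep c A * f.D) * f.M := by simp only [Matrix.mul_assoc]
    _ = 0 := by simp [h]

lemma munnMul_munnMul_of_rep_eq_zero {A' : Matrix ι ι R} (h : f.rep 0 A' = 0)
    (A A'' : Matrix ι ι R) : munnMul P S 0 0 (munnMul P S 0 0 A A') A'' = 0 := by
  have hS : S * A' * S = 0 := by simpa using (f.rep_eq_zero_iff 0 A').1 h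
  calc munnMul P S 0 0 (munnMul P S 0 0 A A') A'' = A * (S * A' * S) * A'' := by
        simp [munnMul, Matrix.mul_assoc]
    _ = 0 := by simp [hS]

end MunnFactorization

end Munn

section Frame

variable {R X ι κ H : Type*} [CommRing R] [Fintype X] [Fintype ι] [Fintype κ] [Fintype H]

/-- Matrices `E`, `U`, `W` such that the products of the matrices `form E U W K (c, α, β)` are given
by two Munn products, with sandwich matrices `S₁` for the component `α` and `S₂` for `β`. -/
structure IsFrame [DecidableEq H] (P₁ S₁ : Matrix ι ι R) (P₂ S₂ : Matrix κ κ R) (E : Matrix X X R)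
    (U : Matrix X ι R) (W : Matrix X (κ × H) R) (K : Matrix H H R) : Prop where
  E_mul_E : E * E = E
  E_mul_U : E * U = U * P₁
  U_mul_E : Uᵀ * E = P₁ * Uᵀ
  E_mul_W : E * W = W * (P₂ ⊗ₖ (1 : Matrix H H R))
  W_mul_E : Wᵀ * E = (P₂ ⊗ₖ (1 : Matrix H H R)) * Wᵀ
  U_mul_U : Uᵀ * U = S₁
  W_mul_W : Wᵀ * W = S₂ ⊗ₖ K
  U_mul_W : Uᵀ * W = 0
  W_mul_U : Wᵀ * U = 0
  K_mul_K : K * K = K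

/-- The matrix with coordinates `(c, α, β)` with respect to the frame `E`, `U`, `W`. -/
def form (E : Matrix X X R) (U : Matrix X ι R) (W : Matrix X (κ × H) R) (K : Matrix H H R) :
    R × Matrix ι ι R × Matrix κ κ R →ₗ[R] Matrix X X R where
  toFun a := a.1 • E + U * a.2.1 * Uᵀ + W * (a.2.2 ⊗ₖ K) * Wᵀ
  map_add' a b := by
    simp only [Prod.fst_add, Prod.snd_add, add_smul, Matrix.add_kronecker, Matrix.mul_add,
      Matrix.add_mul]
    abel
  map_smul' r a := by
    simp only [Prod.smul_fst, Prod.smul_snd, smul_eq_mul, mul_smul, Matrix.smul_kronecker,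
      Matrix.mul_smul, Matrix.smul_mul, smul_add, RingHom.id_apply]

/-- The product of coordinates that corresponds to the product of matrices under `form`. -/
def coordMul (P₁ S₁ : Matrix ι ι R) (P₂ S₂ : Matrix κ κ R)
    (a b : R × Matrix ι ι R × Matrix κ κ R) : R × Matrix ι ι R × Matrix κ κ R :=
  (a.1 * b.1, munnMul P₁ S₁ a.1 b.1 a.2.1 b.2.1, munnMul P₂ S₂ a.1 b.1 a.2.2 b.2.2)

/-- The representation of the coordinates afforded by factorizations of both sandwich matrices. -/
def symbol {ι' κ' : Type*} [Fintype ι'] [DecidableEq ι'] [Fintype κ'] [DecidableEq κ']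
    {P₁ S₁ : Matrix ι ι R} {P₂ S₂ : Matrix κ κ R} (f₁ : MunnFactorization (κ := ι') P₁ S₁)
    (f₂ : MunnFactorization (κ := κ') P₂ S₂) :
    R × Matrix ι ι R × Matrix κ κ R →ₗ[R] Matrix κ' κ' R × Matrix ι' ι' R × R where
  toFun a := (f₂.rep a.1 a.2.2, f₁.rep a.1 a.2.1, a.1)
  map_add' a b := by
    ext1
    · simp only [MunnFactorization.rep, Prod.fst_add, Prod.snd_add, add_smul, Matrix.mul_add,
        Matrix.add_mul]
      abel
    · ext1
      · simp only [MunnFactorization.rep, Prod.fst_add, Prod.snd_add, add_smul, Matrix.mul_add,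
          Matrix.add_mul]
        abel
      · rfl
  map_smul' r a := by
    simp [MunnFactorization.rep, mul_smul]

section Ring

variable {P₁ S₁ : Matrix ι ι R} {P₂ S₂ : Matrix κ κ R} {E : Matrix X X R} {U : Matrix X ι R}
  {W : Matrix X (κ × H) R} {K : Matrix H H R}

lemma form_coordMul [DecidableEq H] (hF : IsFrame P₁ S₁ P₂ S₂ E U W K)
    (a b : R × Matrix ι ι R × Matrix κ κ R) :
    form E U W K (coordMul P₁ S₁ P₂ S₂ a b) = form E U W K a * form E U W K b := by
  obtain ⟨c, α, β⟩ := a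
  obtain ⟨c', α', β'⟩ := b
  have hUW : U * α * Uᵀ * (W * (β' ⊗ₖ K) * Wᵀ) = 0 := by
    rw [Matrix.mul_assoc W, Matrix.mul_assoc, ← Matrix.mul_assoc Uᵀ, hF.U_mul_W, Matrix.zero_mul,
      Matrix.mul_zero]
  have hWU : W * (β ⊗ₖ K) * Wᵀ * (U * α' * Uᵀ) = 0 := by
    rw [Matrix.mul_assoc U, Matrix.mul_assoc, ← Matrix.mul_assoc Wᵀ, hF.W_mul_U, Matrix.zero_mul,
      Matrix.mul_zero]
  simp only [form, coordMul, LinearMap.coe_mk, AddHom.coe_mk,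
    mul_munnMul_mul hF.E_mul_U hF.U_mul_E hF.U_mul_U, ← munnMul_kronecker hF.K_mul_K,
    mul_munnMul_mul hF.E_mul_W hF.W_mul_E hF.W_mul_W, Matrix.add_mul, Matrix.mul_add, hUW, hWU,
    Matrix.smul_mul, Matrix.mul_smul, hF.E_mul_E, smul_add, smul_smul, mul_comm c' c]
  abel

variable {ι' κ' : Type*} [Fintype ι'] [DecidableEq ι'] [Fintype κ'] [DecidableEq κ']
  (f₁ : MunnFactorization (κ := ι') P₁ S₁) (f₂ : MunnFactorization (κ := κ') P₂ S₂)

lemma symbol_coordMul (a b : R × Matrix ι ι R × Matrix κ κ R) :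
    symbol f₁ f₂ (coordMul P₁ S₁ P₂ S₂ a b) = symbol f₁ f₂ a * symbol f₁ f₂ b :=
  Prod.ext (f₂.rep_munnMul ..) (Prod.ext (f₁.rep_munnMul ..) rfl)

lemma symbol_surjective : Function.Surjective (symbol f₁ f₂) := by
  rintro ⟨Y₂, Y₁, c⟩
  obtain ⟨α, hα⟩ := f₁.exists_rep_eq c Y₁
  obtain ⟨β, hβ⟩ := f₂.exists_rep_eq c Y₂
  exact ⟨(c, α, β), Prod.ext hβ (Prod.ext hα rfl)⟩

lemma transpose_mul_form_mul_left [DecidableEq H] (hF : IsFrame P₁ S₁ P₂ S₂ E U W K)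
    (a : R × Matrix ι ι R × Matrix κ κ R) :
    Uᵀ * form E U W K a * U = a.1 • (S₁ * P₁) + S₁ * a.2.1 * S₁ := by
  have hE : Uᵀ * E * U = S₁ * P₁ := by
    rw [Matrix.mul_assoc, hF.E_mul_U, ← Matrix.mul_assoc, hF.U_mul_U]
  have hU : Uᵀ * (U * a.2.1 * Uᵀ) * U = S₁ * a.2.1 * S₁ := by
    simp only [← hF.U_mul_U, Matrix.mul_assoc]
  have hW : Uᵀ * (W * (a.2.2 ⊗ₖ K) * Wᵀ) * U = 0 := by
    simp only [← Matrix.mul_assoc, hF.U_mul_W, Matrix.zero_mul]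
  simp only [form, LinearMap.coe_mk, AddHom.coe_mk, Matrix.mul_add, Matrix.add_mul,
    Matrix.mul_smul, Matrix.smul_mul, hE, hU, hW, add_zero]

lemma transpose_mul_form_mul_right [DecidableEq H] (hF : IsFrame P₁ S₁ P₂ S₂ E U W K)
    (a : R × Matrix ι ι R × Matrix κ κ R) :
    Wᵀ * form E U W K a * W = (a.1 • (S₂ * P₂) + S₂ * a.2.2 * S₂) ⊗ₖ K := by
  have hE : Wᵀ * E * W = (S₂ * P₂) ⊗ₖ K := by
    rw [Matrix.mul_assoc, hF.E_mul_W, ← Matrix.mul_assoc, hF.W_mul_W, ← Matrix.mul_kronecker_mul,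
      Matrix.mul_one]
  have hW : Wᵀ * (W * (a.2.2 ⊗ₖ K) * Wᵀ) * W = (S₂ * a.2.2 * S₂) ⊗ₖ K := by
    calc Wᵀ * (W * (a.2.2 ⊗ₖ K) * Wᵀ) * W = Wᵀ * W * (a.2.2 ⊗ₖ K) * (Wᵀ * W) := by
          simp only [Matrix.mul_assoc]
      _ = (S₂ * a.2.2 * S₂) ⊗ₖ K := by
          rw [hF.W_mul_W, ← Matrix.mul_kronecker_mul, ← Matrix.mul_kronecker_mul, hF.K_mul_K,
            hF.K_mul_K]
  have hU : Wᵀ * (U * a.2.1 * Uᵀ) * W = 0 := by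
    simp only [← Matrix.mul_assoc, hF.W_mul_U, Matrix.zero_mul]
  simp only [form, LinearMap.coe_mk, AddHom.coe_mk, Matrix.mul_add, Matrix.add_mul,
    Matrix.mul_smul, Matrix.smul_mul, hE, hU, hW, add_zero, Matrix.add_kronecker,
    Matrix.smul_kronecker]

lemma symbol_eq_zero_iff (a : R × Matrix ι ι R × Matrix κ κ R) :
    symbol f₁ f₂ a = 0 ↔ f₂.rep a.1 a.2.2 = 0 ∧ f₁.rep a.1 a.2.1 = 0 ∧ a.1 = 0 := by
  simp only [symbol, LinearMap.coe_mk, AddHom.coe_mk, Prod.mk_eq_zero]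

lemma form_mul_mul_of_symbol_eq_zero [DecidableEq H] (hF : IsFrame P₁ S₁ P₂ S₂ E U W K)
    {a b c : R × Matrix ι ι R × Matrix κ κ R} (ha : symbol f₁ f₂ a = 0) (hb : symbol f₁ f₂ b = 0)
    (hc : symbol f₁ f₂ c = 0) : form E U W K a * form E U W K b * form E U W K c = 0 := by
  obtain ⟨-, -, ha₀⟩ := (symbol_eq_zero_iff f₁ f₂ a).1 ha
  obtain ⟨hb₂, hb₁, hb₀⟩ := (symbol_eq_zero_iff f₁ f₂ b).1 hb
  obtain ⟨-, -, hc₀⟩ := (symbol_eq_zero_iff f₁ f₂ c).1 hc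
  rw [hb₀] at hb₁ hb₂
  rw [← form_coordMul hF, ← form_coordMul hF]
  simp only [coordMul, ha₀, hb₀, hc₀, mul_zero, f₁.munnMul_munnMul_of_rep_eq_zero hb₁,
    f₂.munnMul_munnMul_of_rep_eq_zero hb₂]
  exact map_zero (form E U W K)

end Ring

section Field

variable {F : Type*} [Field F] {P₁ S₁ : Matrix ι ι F} {P₂ S₂ : Matrix κ κ F} {E : Matrix X X F}
  {U : Matrix X ι F} {W : Matrix X (κ × H) F} {K : Matrix H H F}
  {ι' κ' : Type*} [Fintype ι'] [DecidableEq ι'] [Fintype κ'] [DecidableEq κ']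

lemma ker_form_le_ker_symbol [DecidableEq H] (f₁ : MunnFactorization (κ := ι') P₁ S₁)
    (f₂ : MunnFactorization (κ := κ') P₂ S₂) (hF : IsFrame P₁ S₁ P₂ S₂ E U W K)
    (hSP : S₁ * P₁ = 0) (hEU : E * U ≠ 0) (hK : K ≠ 0) :
    LinearMap.ker (form E U W K) ≤ LinearMap.ker (symbol f₁ f₂) := by
  intro a ha
  rw [LinearMap.mem_ker] at ha
  have h₁ := transpose_mul_form_mul_left hF a
  have h₂ := transpose_mul_form_mul_right hF a
  rw [ha, Matrix.mul_zero, Matrix.zero_mul] at h₁ h₂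
  have hrep₁ : f₁.rep a.1 a.2.1 = 0 := (f₁.rep_eq_zero_iff _ _).2 h₁.symm
  have hrep₂ : f₂.rep a.1 a.2.2 = 0 := by
    obtain ⟨i, j, hij⟩ : ∃ i j, K i j ≠ 0 := by
      by_contra! h
      exact hK (Matrix.ext h)
    refine (f₂.rep_eq_zero_iff _ _).2 (Matrix.ext fun k l => ?_)
    exact (mul_eq_zero.1 (congr_fun₂ h₂ (k, i) (l, j)).symm).resolve_right hij
  -- Since `S₁ * P₁ = 0`, multiplying by `U * P₁ = E * U` on the right kills all but the `E` term.
  have hE : a.1 • (E * U) = 0 := by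
    have h : form E U W K a * (U * P₁) = a.1 • (E * U) := by
      have hEUP : E * (U * P₁) = E * U := by rw [← hF.E_mul_U, ← Matrix.mul_assoc, hF.E_mul_E]
      have hUP : Uᵀ * (U * P₁) = 0 := by rw [← Matrix.mul_assoc, hF.U_mul_U, hSP]
      have hWP : Wᵀ * (U * P₁) = 0 := by rw [← Matrix.mul_assoc, hF.W_mul_U, Matrix.zero_mul]
      simp only [form, LinearMap.coe_mk, AddHom.coe_mk, Matrix.add_mul, Matrix.smul_mul,
        Matrix.mul_assoc, hEUP, hUP, hWP, Matrix.mul_zero, add_zero]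
    rw [← h, ha, Matrix.zero_mul]
  exact (symbol_eq_zero_iff f₁ f₂ a).2 ⟨hrep₂, hrep₁, (smul_eq_zero.1 hE).resolve_right hEU⟩

theorem exists_algHom_of_isFrame [DecidableEq X] [DecidableEq H] (T : Subalgebra F (Matrix X X F))
    (f₁ : MunnFactorization (κ := ι') P₁ S₁) (f₂ : MunnFactorization (κ := κ') P₂ S₂)
    (hF : IsFrame P₁ S₁ P₂ S₂ E U W K)
    (hT : Subalgebra.toSubmodule T = LinearMap.range (form E U W K))
    (hSP : S₁ * P₁ = 0) (hEU : E * U ≠ 0) (hK : K ≠ 0) :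
    ∃ φ : T →ₐ[F] (Matrix κ' κ' F × Matrix ι' ι' F × F), Function.Surjective φ ∧
      ∀ t₁ t₂ t₃ : T, φ t₁ = 0 → φ t₂ = 0 → φ t₃ = 0 → t₁ * t₂ * t₃ = 0 := by
  obtain ⟨φ, hφ, hφ_form⟩ := exists_algHom_of_ker_le T (form E U W K) (symbol f₁ f₂)
    (coordMul P₁ S₁ P₂ S₂) hT (form_coordMul hF) (symbol_coordMul f₁ f₂)
    (ker_form_le_ker_symbol f₁ f₂ hF hSP hEU hK) (symbol_surjective f₁ f₂)
  have exists_coord (t : T) (ht : φ t = 0) : ∃ a, form E U W K a = t ∧ symbol f₁ f₂ a = 0 := by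
    obtain ⟨a, ha⟩ : (t : Matrix X X F) ∈ LinearMap.range (form E U W K) :=
      hT ▸ (Subalgebra.mem_toSubmodule T).2 t.2
    exact ⟨a, ha, (hφ_form a t ha).symm.trans ht⟩
  refine ⟨φ, hφ, fun t₁ t₂ t₃ h₁ h₂ h₃ => Subtype.ext ?_⟩
  obtain ⟨a, ha, ha0⟩ := exists_coord t₁ h₁
  obtain ⟨b, hb, hb0⟩ := exists_coord t₂ h₂
  obtain ⟨c, hc, hc0⟩ := exists_coord t₃ h₃
  simpa [← ha, ← hb, ← hc] using form_mul_mul_of_symbol_eq_zero f₁ f₂ hF ha0 hb0 hc0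

end Field

end Frame

section Net

variable {G : Type} [Group G]

/-- The index of the relation `R_{d + 1}`: being distinct points on a common line of direction
`d`. -/
def line (d : Fin 3) : Fin 5 := d.succ.castSucc

lemma line_ne_zero (d : Fin 3) : line d ≠ 0 := by decide +revert

lemma line_ne_four (d : Fin 3) : line d ≠ 4 := by decide +revert

lemma cIdx_line (d : Fin 3) : cIdx (line d) = d := by decide +revert

lemma eq_zero_or_four_or_line (a : Fin 5) : a = 0 ∨ a = 4 ∨ ∃ d, a = line d := by
  unfold line
  decide +revert

lemma rel_zero {y z : XG G} : rel 0 y z ↔ y = z := by simp [rel]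

lemma rel_line {d : Fin 3} {y z : XG G} : rel (line d) y z ↔ y ≠ z ∧ y.1 d = z.1 d := by
  simp [rel, line_ne_zero, line_ne_four, cIdx_line]

lemma rel_four {y z : XG G} : rel 4 y z ↔ ∀ d, y.1 d ≠ z.1 d := by simp [rel]

lemma eq_of_eq_of_eq {i j : Fin 3} (hij : i ≠ j) {y z : XG G} (hi : y.1 i = z.1 i)
    (hj : y.1 j = z.1 j) : y = z := by
  obtain ⟨y, hy⟩ := y
  obtain ⟨z, hz⟩ := z
  have h01 (h0 : y 0 = z 0) (h1 : y 1 = z 1) : y 2 = z 2 := by rw [← hy, ← hz, h0, h1]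
  have h02 (h0 : y 0 = z 0) (h2 : y 2 = z 2) : y 1 = z 1 :=
    mul_left_cancel (a := y 0) (by rw [hy, h2, ← hz, h0])
  have h12 (h1 : y 1 = z 1) (h2 : y 2 = z 2) : y 0 = z 0 :=
    mul_right_cancel (b := y 1) (by rw [hy, h2, ← hz, h1])
  have hcoord : y 0 = z 0 ∧ y 1 = z 1 ∧ y 2 = z 2 := by
    fin_cases i <;> fin_cases j <;> simp_all
  exact Subtype.ext (funext fun d => by fin_cases d <;> simp [hcoord])

lemma exists_coords_eq {i j : Fin 3} (hij : i ≠ j) (g h : G) :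
    ∃ y : XG G, y.1 i = g ∧ y.1 j = h := by
  have exists_point {a b c : G} (habc : a * b = c) :
      ∃ y : XG G, y.1 0 = a ∧ y.1 1 = b ∧ y.1 2 = c :=
    ⟨⟨![a, b, c], by simpa using habc⟩, rfl, rfl, rfl⟩
  fin_cases i <;> fin_cases j <;> first | contradiction | skip
  · exact (exists_point rfl).imp fun y hy => ⟨hy.1, hy.2.1⟩
  · exact (exists_point (mul_inv_cancel_left g h)).imp fun y hy => ⟨hy.1, hy.2.2⟩
  · exact (exists_point rfl).imp fun y hy => ⟨hy.2.1, hy.1⟩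
  · exact (exists_point (inv_mul_cancel_right h g)).imp fun y hy => ⟨hy.2.1, hy.2.2⟩
  · exact (exists_point (mul_inv_cancel_left h g)).imp fun y hy => ⟨hy.2.2, hy.1⟩
  · exact (exists_point (inv_mul_cancel_right g h)).imp fun y hy => ⟨hy.2.2, hy.2.1⟩

lemma existsUnique_rel (y z : XG G) : ∃! a, rel a y z := by
  by_cases hyz : y = z
  · refine ⟨0, rel_zero.2 hyz, fun a ha => ?_⟩
    obtain rfl | rfl | ⟨d, rfl⟩ := eq_zero_or_four_or_line a
    · rfl
    · exact absurd (congr_arg (·.1 0) hyz) (rel_four.1 ha 0)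
    · exact absurd hyz (rel_line.1 ha).1
  by_cases hd : ∃ d, y.1 d = z.1 d
  · obtain ⟨d, hd⟩ := hd
    refine ⟨line d, rel_line.2 ⟨hyz, hd⟩, fun a ha => ?_⟩
    obtain rfl | rfl | ⟨e, rfl⟩ := eq_zero_or_four_or_line a
    · exact absurd (rel_zero.1 ha) hyz
    · exact absurd hd (rel_four.1 ha d)
    · by_contra hne
      exact hyz (eq_of_eq_of_eq (fun h => hne (congr_arg line h)) (rel_line.1 ha).2 hd)
  · push Not at hd
    refine ⟨4, rel_four.2 hd, fun a ha => ?_⟩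
    obtain rfl | rfl | ⟨e, rfl⟩ := eq_zero_or_four_or_line a
    · exact absurd (rel_zero.1 ha) hyz
    · rfl
    · exact absurd (rel_line.1 ha).2 (hd e)

lemma rel_unique {a b : Fin 5} {y z : XG G} (ha : rel a y z) (hb : rel b y z) : a = b :=
  (existsUnique_rel y z).unique ha hb

end Net

section Coord

variable {G : Type} [Group G] {x y : XG G}

/-- The coordinate of `y` in direction `d` relative to the base point `x`. -/
def coord (x y : XG G) (d : Fin 3) : G := (x.1 d)⁻¹ * y.1 d

lemma coord_eq_one_iff {d : Fin 3} : coord x y d = 1 ↔ x.1 d = y.1 d := by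
  rw [coord, inv_mul_eq_one]

lemma coord_inj {z : XG G} {d : Fin 3} : coord x y d = coord x z d ↔ y.1 d = z.1 d := by
  simp [coord]

lemma rel_line_iff_coord {i j : Fin 3} (hij : i ≠ j) :
    rel (line i) x y ↔ coord x y i = 1 ∧ coord x y j ≠ 1 := by
  rw [rel_line, Ne, Ne, coord_eq_one_iff, coord_eq_one_iff, and_comm]
  exact and_congr_right fun hi =>
    not_congr ⟨fun h => congr_arg (·.1 j) h, fun hj => eq_of_eq_of_eq hij hi hj⟩

lemma rel_four_iff_coord : rel 4 x y ↔ ∀ d, coord x y d ≠ 1 := by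
  simp only [rel_four, Ne, coord_eq_one_iff]

lemma existsUnique_coord_eq {i j : Fin 3} (hij : i ≠ j) (x : XG G) (g h : G) :
    ∃! y : XG G, coord x y i = g ∧ coord x y j = h := by
  obtain ⟨y, hi, hj⟩ := exists_coords_eq hij (x.1 i * g) (x.1 j * h)
  refine ⟨y, by simp [coord, hi, hj], fun z hz => eq_of_eq_of_eq hij ?_ ?_⟩
  · rw [hi, ← hz.1, coord, mul_inv_cancel_left]
  · rw [hj, ← hz.2, coord, mul_inv_cancel_left]

lemma coord_mul_coord (hG : ∀ a : G, a ^ 2 = 1) {i j k : Fin 3} (hij : i ≠ j) (hik : i ≠ k)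
    (hjk : j ≠ k) : coord x y i * coord x y j = coord x y k := by
  have comm (a b : G) : a * b = b * a :=
    Commute.of_orderOf_dvd_two (fun g => orderOf_dvd_of_pow_eq_one (hG g)) a b
  let _ : CommGroup G := { mul_comm := comm }
  have mul_mul_self (a b : G) : a * b * b = a := by rw [mul_assoc, ← sq, hG, mul_one]
  have h01 : coord x y 0 * coord x y 1 = coord x y 2 := by
    rw [coord, coord, coord, ← x.2, ← y.2, mul_inv, mul_mul_mul_comm]
  have h21 : coord x y 2 * coord x y 1 = coord x y 0 := by rw [← h01, mul_mul_self]
  have h20 : coord x y 2 * coord x y 0 = coord x y 1 := by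
    rw [← h01, comm (coord x y 0), mul_mul_self]
  fin_cases i <;> fin_cases j <;> fin_cases k <;> first
    | contradiction
    | exact h01
    | exact h21
    | exact h20
    | exact (comm _ _).trans h01
    | exact (comm _ _).trans h21
    | exact (comm _ _).trans h20

lemma coord_mul_coord_eq_one_iff (hG : ∀ a : G, a ^ 2 = 1) {i j : Fin 3} :
    coord x y i * coord x y j = 1 ↔ coord x y i = coord x y j := by
  rw [mul_eq_one_iff_eq_inv, inv_eq_of_mul_eq_one_left ((sq _).symm.trans (hG _))]

lemma rel_four_iff_coord_ne (hG : ∀ a : G, a ^ 2 = 1) {i j : Fin 3} (hij : i ≠ j) :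
    rel 4 x y ↔ coord x y i ≠ 1 ∧ coord x y j ≠ 1 ∧ coord x y i ≠ coord x y j := by
  obtain ⟨k, hik, hjk, hk⟩ : ∃ k, i ≠ k ∧ j ≠ k ∧ ∀ d, d = i ∨ d = j ∨ d = k := by
    decide +revert
  rw [rel_four_iff_coord, ne_eq (coord x y i) (coord x y j), ← coord_mul_coord_eq_one_iff hG,
    coord_mul_coord hG hij hik hjk]
  refine ⟨fun h => ⟨h i, h j, h k⟩, fun ⟨hi, hj, hk'⟩ d => ?_⟩
  obtain rfl | rfl | rfl := hk d <;> assumption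

end Coord

section Centering

variable {F H : Type*} [Field F] [DecidableEq H]

/-- The matrix `1 - J`, with `J` the all-ones matrix: the projection along the constant vectors
when the number of indices is `1` in `F`. -/
def centering (F H : Type*) [Field F] [DecidableEq H] : Matrix H H F :=
  1 - of fun _ _ => 1

lemma centering_transpose : (centering F H)ᵀ = centering F H := by
  ext g h
  simp [centering, Matrix.one_apply, eq_comm]

lemma centering_ne_zero [Nontrivial H] : centering F H ≠ 0 := by
  obtain ⟨g, h, hgh⟩ := exists_pair_ne H
  intro h0
  have := congr_fun₂ h0 g h
  simp [centering, hgh] at this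

variable [Fintype H]

lemma sum_centering_left (hH : (Fintype.card H : F) = 1) (g : H) :
    ∑ h, centering F H g h = 0 := by
  simp [centering, Matrix.one_apply, hH]

lemma sum_centering_right (hH : (Fintype.card H : F) = 1) (h : H) :
    ∑ g, centering F H g h = 0 := by
  simp [centering, Matrix.one_apply, hH]

lemma centering_mul_centering (hH : (Fintype.card H : F) = 1) :
    centering F H * centering F H = centering F H := by
  have hJ : centering F H * (of fun _ _ => 1 : Matrix H H F) = 0 := by
    ext g h
    simp [Matrix.mul_apply, sum_centering_left hH]
  calc centering F H * centering F H
      = centering F H * 1 - centering F H * of fun _ _ => 1 := Matrix.mul_sub _ _ _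
    _ = centering F H := by rw [hJ, Matrix.mul_one, sub_zero]

end Centering

section Blocks

variable {F G : Type} [Field F] [Group G] {x y z : XG G} {k l : Fin 3 ⊕ Fin 3} {d : Fin 3}

/-- The block of points carrying the axis label: `inl d` belongs to the points on the line of
direction `d` through the base point, and `inr d` to the points on none of the three lines. -/
def blockOf : Fin 3 ⊕ Fin 3 → Fin 5 := Sum.elim line fun _ => 4

/-- The direction whose coordinate sorts the points of a block into the fibres of a label. -/
def axis : Fin 3 ⊕ Fin 3 → Fin 3 := Sum.elim (· + 1) id

/-- The directions whose coordinate agrees with the one in direction `axis k` on `blockOf k`. -/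
def IsAxis : Fin 3 ⊕ Fin 3 → Fin 3 → Prop
  | .inl i, d => d ≠ i
  | .inr e, d => d = e

instance : DecidableRel IsAxis
  | .inl i, d => inferInstanceAs (Decidable (d ≠ i))
  | .inr e, d => inferInstanceAs (Decidable (d = e))

lemma isAxis_axis (k : Fin 3 ⊕ Fin 3) : IsAxis k (axis k) := by decide +revert

lemma coord_ne_one (hd : IsAxis k d) (hy : rel (blockOf k) x y) : coord x y d ≠ 1 := by
  obtain i | e := k
  · exact ((rel_line_iff_coord (Ne.symm hd)).1 hy).2
  · exact rel_four_iff_coord.1 hy d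

lemma forall_eq_or_exists_isAxis (x : XG G) (a : Fin 5) (d : Fin 3) :
    (∀ y : XG G, rel a x y → x.1 d = y.1 d) ∨ ∃ k, blockOf k = a ∧ IsAxis k d := by
  obtain rfl | rfl | ⟨i, rfl⟩ := eq_zero_or_four_or_line a
  · exact .inl fun y hy => by rw [rel_zero.1 hy]
  · exact .inr ⟨.inr d, rfl, rfl⟩
  · obtain rfl | hdi := eq_or_ne d i
    · exact .inl fun y hy => (rel_line.1 hy).2
    · exact .inr ⟨.inl i, rfl, hdi⟩

lemma coord_eq_coord_axis (hG : ∀ a : G, a ^ 2 = 1) (hd : IsAxis k d)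
    (hy : rel (blockOf k) x y) : coord x y d = coord x y (axis k) := by
  obtain i | e := k
  · have hi : i ≠ i + 1 := by simp
    obtain rfl | hdi := eq_or_ne d (i + 1)
    · rfl
    · rw [← coord_mul_coord hG hi (Ne.symm hd) hdi.symm, ((rel_line_iff_coord hi).1 hy).1, one_mul]
      rfl
  · exact congr_arg _ hd

variable [DecidableEq G]

/-- The indicator vectors of the five blocks of points around `x`, as columns. -/
def blockMatrix (F : Type) [Field F] (x : XG G) : Matrix (XG G) (Fin 5) F :=
  of fun y a => if rel a x y then 1 else 0

/-- The indicator vectors of the fibres of `coord x · (axis k)` on `blockOf k`, as columns. -/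
def axisMatrix (F : Type) [Field F] (x : XG G) (k : Fin 3 ⊕ Fin 3) :
    Matrix (XG G) {g : G // g ≠ 1} F :=
  of fun y g => if rel (blockOf k) x y ∧ coord x y (axis k) = g then 1 else 0

lemma axisMatrix_apply_of_rel (hy : rel (blockOf k) x y) :
    axisMatrix F x k y = Pi.single ⟨coord x y (axis k), coord_ne_one (isAxis_axis k) hy⟩ 1 := by
  ext g
  simp [axisMatrix, hy, Pi.single_apply, Subtype.ext_iff, eq_comm]

lemma axisMatrix_apply_of_not_rel (hy : ¬ rel (blockOf k) x y) : axisMatrix F x k y = 0 := by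
  ext g
  simp [axisMatrix, hy]

lemma blockMatrix_apply_of_rel {a : Fin 5} (ha : rel a x y) :
    blockMatrix F x y = Pi.single a 1 := by
  ext b
  by_cases hab : b = a
  · simp [blockMatrix, hab, ha]
  · have : ¬ rel b x y := fun hb => hab (rel_unique hb ha)
    simp [blockMatrix, hab, this]

lemma axisMatrix_mul_blockMatrix (k : Fin 3 ⊕ Fin 3) (y : XG G) (g : {g : G // g ≠ 1}) (a : Fin 5) :
    axisMatrix F x k y g * blockMatrix F x y a =
      if blockOf k = a then axisMatrix F x k y g else 0 := by
  by_cases hy : rel (blockOf k) x y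
  · simp [blockMatrix_apply_of_rel hy, Pi.single_apply, eq_comm]
  · simp [axisMatrix_apply_of_not_rel hy]

variable [Fintype G]

lemma sum_axisMatrix (k : Fin 3 ⊕ Fin 3) (y : XG G) :
    ∑ g, axisMatrix F x k y g = blockMatrix F x y (blockOf k) := by
  by_cases hy : rel (blockOf k) x y
  · simp [axisMatrix_apply_of_rel hy, blockMatrix, hy]
  · simp [axisMatrix_apply_of_not_rel hy, blockMatrix, hy]

lemma sum_ite_coord_eq {i j : Fin 3} (hij : i ≠ j) (g h : G) :
    ∑ y, (if coord x y i = g ∧ coord x y j = h then 1 else 0 : F) = 1 := by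
  obtain ⟨y, hy, huniq⟩ := existsUnique_coord_eq hij x g h
  rw [Fintype.sum_eq_single y fun z hz => if_neg (hz ∘ huniq z), if_pos hy]

end Blocks

section Gram

variable {F G : Type} [Field F] [Group G] [Fintype G] [DecidableEq G] {x : XG G}
  {k l : Fin 3 ⊕ Fin 3}

lemma gram_apply (k l : Fin 3 ⊕ Fin 3) (g h : {g : G // g ≠ 1}) :
    ((axisMatrix F x k)ᵀ * axisMatrix F x l) g h =
      ∑ y, if (rel (blockOf k) x y ∧ coord x y (axis k) = g) ∧
        (rel (blockOf l) x y ∧ coord x y (axis l) = h) then 1 else 0 := by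
  simp only [Matrix.mul_apply, Matrix.transpose_apply, axisMatrix, of_apply, ite_zero_mul_ite_zero,
    mul_one]

lemma gram_of_blockOf_ne (hkl : blockOf k ≠ blockOf l) :
    (axisMatrix F x k)ᵀ * axisMatrix F x l = 0 := by
  ext g h
  rw [gram_apply]
  exact Finset.sum_eq_zero fun y _ => if_neg fun hy => hkl (rel_unique hy.1.1 hy.2.1)

lemma gram_self_apply_of_ne {g h : {g : G // g ≠ 1}} (hgh : g ≠ h) :
    ((axisMatrix F x k)ᵀ * axisMatrix F x k) g h = 0 := by
  rw [gram_apply]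
  exact Finset.sum_eq_zero fun y _ => if_neg fun hy =>
    hgh (Subtype.ext (hy.1.2.symm.trans hy.2.2))

lemma gram_inl (i : Fin 3) :
    (axisMatrix F x (.inl i))ᵀ * axisMatrix F x (.inl i) = 1 := by
  ext g h
  obtain rfl | hgh := eq_or_ne g h
  · have hi : i ≠ i + 1 := by simp
    have hiff (y : XG G) : rel (blockOf (.inl i)) x y ∧ coord x y (axis (.inl i)) = g ↔
        coord x y i = 1 ∧ coord x y (i + 1) = g :=
      ⟨fun hy => ⟨((rel_line_iff_coord hi).1 hy.1).1, hy.2⟩,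
        fun hy => ⟨(rel_line_iff_coord hi).2 ⟨hy.1, hy.2 ▸ g.2⟩, hy.2⟩⟩
    simp only [gram_apply, and_self, hiff, sum_ite_coord_eq hi, Matrix.one_apply_eq]
  · rw [gram_self_apply_of_ne hgh, Matrix.one_apply_ne hgh]

lemma gram_inr_of_ne (hG : ∀ a : G, a ^ 2 = 1) {d e : Fin 3} (hde : d ≠ e) :
    (axisMatrix F x (.inr d))ᵀ * axisMatrix F x (.inr e) = -centering F {g : G // g ≠ 1} := by
  ext g h
  have hiff (y : XG G) : (rel 4 x y ∧ coord x y d = g) ∧ (rel 4 x y ∧ coord x y e = h) ↔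
      g ≠ h ∧ coord x y d = g ∧ coord x y e = h := by
    constructor
    · rintro ⟨⟨hy, hg⟩, -, hh⟩
      exact ⟨fun hgh => ((rel_four_iff_coord_ne hG hde).1 hy).2.2 (by rw [hg, hh, hgh]), hg, hh⟩
    · rintro ⟨hgh, hg, hh⟩
      have hy : rel 4 x y := (rel_four_iff_coord_ne hG hde).2
        ⟨hg ▸ g.2, hh ▸ h.2, by rwa [hg, hh, Subtype.coe_ne_coe]⟩
      exact ⟨⟨hy, hg⟩, hy, hh⟩
  simp only [gram_apply, blockOf, axis, Sum.elim_inr, id, hiff]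
  obtain rfl | hgh := eq_or_ne g h
  · simp [centering]
  · simp [centering, hgh, sum_ite_coord_eq hde]

lemma gram_inr_self (hG : ∀ a : G, a ^ 2 = 1) (hH : (Fintype.card {g : G // g ≠ 1} : F) = 1)
    (d : Fin 3) : (axisMatrix F x (.inr d))ᵀ * axisMatrix F x (.inr d) = 0 := by
  ext g h
  obtain rfl | hgh := eq_or_ne g h
  · have hd : d ≠ d + 1 := by simp
    have hblock : blockOf (.inr d) = blockOf (.inr (d + 1)) := rfl
    have hsq (y : XG G) : axisMatrix F x (.inr d) y g * axisMatrix F x (.inr d) y g =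
        ∑ h, axisMatrix F x (.inr d) y g * axisMatrix F x (.inr (d + 1)) y h := by
      rw [← Finset.mul_sum, sum_axisMatrix, axisMatrix_mul_blockMatrix, if_pos hblock]
      simp [axisMatrix]
    calc ((axisMatrix F x (.inr d))ᵀ * axisMatrix F x (.inr d)) g g
        = ∑ h, ((axisMatrix F x (.inr d))ᵀ * axisMatrix F x (.inr (d + 1))) g h := by
          simp only [Matrix.mul_apply, Matrix.transpose_apply, hsq]
          exact Finset.sum_comm
      _ = 0 := by simp [gram_inr_of_ne hG hd, sum_centering_left hH]
  · rw [gram_self_apply_of_ne hgh, Matrix.zero_apply]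

end Gram

section Factorizations

/-- The projection onto the indices lying over block `4`, through which `DualE F x 4` acts. -/
def generalPart (F : Type) [Field F] {ι : Type} [DecidableEq ι] (b : ι → Fin 5) : Matrix ι ι F :=
  diagonal fun i => if b i = 4 then 1 else 0

/-- The Gram matrix of the block indicators in characteristic `2`. -/
def blockGram (F : Type) [Field F] : Matrix (Fin 5) (Fin 5) F :=
  diagonal fun a => if a = 4 then 0 else 1

/-- The coefficients of `centering` in the Gram matrices of the centred axis indicators in
characteristic `2`. -/
def axisGram (F : Type) [Field F] : Matrix (Fin 3 ⊕ Fin 3) (Fin 3 ⊕ Fin 3) F :=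
  fromBlocks 1 0 0 (of fun d e => if d = e then 0 else 1)

variable (F : Type) [Field F]

lemma blockGram_mul_generalPart : blockGram F * generalPart F id = 0 := by
  rw [blockGram, generalPart, diagonal_mul_diagonal, ← diagonal_zero]
  congr 1
  ext a
  by_cases ha : a = 4 <;> simp [ha]

lemma generalPart_blockOf : generalPart F blockOf = fromBlocks 0 0 0 1 := by
  ext (d | d) (e | e) <;>
    simp [generalPart, diagonal_apply, blockOf, line_ne_four, Matrix.one_apply]

/-- The factorization of `blockGram` through its first four indices. -/
def blockFactorization :
    MunnFactorization (κ := Fin 4) (generalPart F id) (blockGram F) where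
  C := (1 : Matrix (Fin 5) (Fin 5) F).submatrix id Fin.castSucc
  D := (1 : Matrix (Fin 5) (Fin 5) F).submatrix Fin.castSucc id
  L := (1 : Matrix (Fin 5) (Fin 5) F).submatrix Fin.castSucc id
  M := (1 : Matrix (Fin 5) (Fin 5) F).submatrix id Fin.castSucc
  Q := 0
  C_mul_D := by
    ext a b
    fin_cases a <;> fin_cases b <;>
      simp [Matrix.mul_apply, Fin.sum_univ_four, blockGram, Matrix.one_apply]
  L_mul_C := by
    rw [← submatrix_mul _ _ _ _ _ Function.bijective_id, Matrix.one_mul,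
      submatrix_one _ (Fin.castSucc_injective 4)]
  D_mul_M := by
    rw [← submatrix_mul _ _ _ _ _ Function.bijective_id, Matrix.one_mul,
      submatrix_one _ (Fin.castSucc_injective 4)]
  P_mul_C := by
    ext a b
    fin_cases a <;> fin_cases b <;> simp [generalPart, Matrix.one_apply]
  D_mul_P := by
    ext a b
    fin_cases a <;> fin_cases b <;> simp [generalPart, Matrix.one_apply]
  Q_mul_Q := Matrix.zero_mul 0

/-- The factorization of `axisGram` in characteristic `2`, where the off-diagonal `3 × 3` matrix
of ones has rank `2`. -/
def axisFactorization [CharP F 2] :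
    MunnFactorization (κ := Fin 3 ⊕ Fin 2) (generalPart F blockOf) (axisGram F) where
  C := fromBlocks 1 0 0 !![1, 0; 0, 1; 1, 1]
  D := fromBlocks 1 0 0 !![0, 1, 1; 1, 0, 1]
  L := fromBlocks 1 0 0 !![1, 0, 0; 0, 1, 0]
  M := fromBlocks 1 0 0 !![0, 1; 1, 0; 0, 0]
  Q := fromBlocks 0 0 0 1
  C_mul_D := by
    rw [axisGram, fromBlocks_multiply]
    congr 1
    · simp
    · simp
    · simp
    · ext i j
      fin_cases i <;> fin_cases j <;> simp [CharTwo.add_self_eq_zero]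
  L_mul_C := by
    rw [← fromBlocks_one, fromBlocks_multiply]
    congr 1 <;> simp [Matrix.one_fin_two]
  D_mul_M := by
    rw [← fromBlocks_one, fromBlocks_multiply]
    congr 1 <;> simp [Matrix.one_fin_two]
  P_mul_C := by simp [generalPart_blockOf, fromBlocks_multiply]
  D_mul_P := by simp [generalPart_blockOf, fromBlocks_multiply]
  Q_mul_Q := by simp [fromBlocks_multiply]

end Factorizations

namespace MunnFactorization

/-- Reindexing of the inner index type of a factorization. -/
def reindex {R ι κ κ' : Type*} [CommRing R] [Fintype ι] [Fintype κ] [Fintype κ'] [DecidableEq κ]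
    [DecidableEq κ'] {P S : Matrix ι ι R} (f : MunnFactorization (κ := κ) P S) (e : κ' ≃ κ) :
    MunnFactorization (κ := κ') P S where
  C := f.C.submatrix id e
  D := f.D.submatrix e id
  L := f.L.submatrix e id
  M := f.M.submatrix id e
  Q := f.Q.submatrix e e
  C_mul_D := by rw [submatrix_mul_equiv, f.C_mul_D, submatrix_id_id]
  L_mul_C := by rw [← submatrix_mul _ _ _ _ _ Function.bijective_id, f.L_mul_C, submatrix_one_equiv]
  D_mul_M := by rw [← submatrix_mul _ _ _ _ _ Function.bijective_id, f.D_mul_M, submatrix_one_equiv]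
  P_mul_C := by
    rw [submatrix_mul_equiv, ← f.P_mul_C, submatrix_mul _ _ _ id _ Function.bijective_id,
      submatrix_id_id]
  D_mul_P := by
    rw [submatrix_mul_equiv, ← f.D_mul_P, submatrix_mul _ _ _ id _ Function.bijective_id,
      submatrix_id_id]
  Q_mul_Q := by rw [submatrix_mul_equiv, f.Q_mul_Q]

end MunnFactorization

section CentredAxes

variable {F G : Type} [Field F] [Group G] [DecidableEq G] {x y : XG G} {k l : Fin 3 ⊕ Fin 3}

lemma blockMatrix_mul_blockMatrix (y : XG G) (a b : Fin 5) :
    blockMatrix F x y a * blockMatrix F x y b = if a = b then blockMatrix F x y a else 0 := by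
  by_cases hy : rel a x y
  · simp [blockMatrix_apply_of_rel hy, Pi.single_apply, eq_comm]
  · simp [blockMatrix, hy]

lemma DualE_eq_diagonal (a : Fin 5) : DualE F x a = diagonal fun y => blockMatrix F x y a := by
  ext y z
  simp [DualE, blockMatrix, diagonal_apply, ite_and]

variable [Fintype G]

lemma DualE_mul_axisMatrix (a : Fin 5) (k : Fin 3 ⊕ Fin 3) :
    DualE F x a * axisMatrix F x k = if blockOf k = a then axisMatrix F x k else 0 := by
  ext y g
  rw [DualE_eq_diagonal, diagonal_mul, mul_comm, axisMatrix_mul_blockMatrix]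
  split_ifs <;> rfl

lemma axisGram_apply_of_blockOf_ne (hkl : blockOf k ≠ blockOf l) : axisGram F k l = 0 := by
  obtain i | d := k <;> obtain j | e := l
  · exact Matrix.one_apply_ne fun hij => hkl (congr_arg (blockOf ∘ .inl) hij)
  · rfl
  · rfl
  · exact absurd rfl hkl

/-- The axis indicators, projected along the constant vectors. -/
def centredAxis (F : Type) [Field F] (x : XG G) (k : Fin 3 ⊕ Fin 3) :
    Matrix (XG G) {g : G // g ≠ 1} F :=
  axisMatrix F x k * centering F {g : G // g ≠ 1}

lemma centredAxis_gram [CharP F 2] (hG : ∀ a : G, a ^ 2 = 1)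
    (hH : (Fintype.card {g : G // g ≠ 1} : F) = 1) (k l : Fin 3 ⊕ Fin 3) :
    (centredAxis F x k)ᵀ * centredAxis F x l =
      axisGram F k l • centering F {g : G // g ≠ 1} := by
  have hKK := centering_mul_centering hH
  rw [centredAxis, centredAxis, transpose_mul, centering_transpose, Matrix.mul_assoc,
    ← Matrix.mul_assoc _ᵀ]
  by_cases hkl : blockOf k = blockOf l
  · obtain i | d := k <;> obtain j | e := l
    · obtain rfl : i = j := by unfold blockOf line at hkl; simpa using hkl
      simp [gram_inl, axisGram, hKK]
    · exact absurd hkl (line_ne_four i)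
    · exact absurd hkl.symm (line_ne_four j)
    · obtain rfl | hde := eq_or_ne d e
      · simp [gram_inr_self hG hH, axisGram]
      · rw [gram_inr_of_ne hG hde, ← neg_one_smul F, CharTwo.neg_eq]
        simp [axisGram, hde, hKK]
  · rw [gram_of_blockOf_ne hkl, axisGram_apply_of_blockOf_ne hkl]
    simp

lemma sum_axisMatrix_right (hG : ∀ a : G, a ^ 2 = 1)
    (hH : (Fintype.card {g : G // g ≠ 1} : F) = 1) (k : Fin 3 ⊕ Fin 3) (g : {g : G // g ≠ 1}) :
    ∑ y, axisMatrix F x k y g = axisGram F k k := by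
  have hgram : ∑ y, axisMatrix F x k y g = ((axisMatrix F x k)ᵀ * axisMatrix F x k) g g := by
    simp only [gram_apply, and_self]
    rfl
  rw [hgram]
  obtain i | d := k
  · simp [gram_inl, axisGram]
  · simp [gram_inr_self hG hH, axisGram]

lemma sum_blockMatrix (hG : ∀ a : G, a ^ 2 = 1)
    (hH : (Fintype.card {g : G // g ≠ 1} : F) = 1) (a : Fin 5) :
    ∑ y, blockMatrix F x y a = if a = 4 then 0 else 1 := by
  have hblock (k : Fin 3 ⊕ Fin 3) : ∑ y, blockMatrix F x y (blockOf k) = axisGram F k k := by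
    calc ∑ y, blockMatrix F x y (blockOf k) = ∑ g, ∑ y, axisMatrix F x k y g := by
          simp only [← sum_axisMatrix]
          exact Finset.sum_comm
      _ = axisGram F k k := by
          rw [Fintype.sum_congr _ _ (sum_axisMatrix_right hG hH k), Finset.sum_const,
            Finset.card_univ, nsmul_eq_mul, hH, one_mul]
  obtain rfl | rfl | ⟨d, rfl⟩ := eq_zero_or_four_or_line a
  · simp [blockMatrix, rel_zero]
  · exact (hblock (.inr 0)).trans (by simp [axisGram])
  · exact (hblock (.inl d)).trans (by simp [axisGram, line_ne_four])

lemma blockMatrix_transpose_mul_self (hG : ∀ a : G, a ^ 2 = 1)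
    (hH : (Fintype.card {g : G // g ≠ 1} : F) = 1) :
    (blockMatrix F x)ᵀ * blockMatrix F x = blockGram F := by
  ext a b
  simp only [Matrix.mul_apply, Matrix.transpose_apply, blockMatrix_mul_blockMatrix, blockGram,
    diagonal_apply]
  obtain rfl | hab := eq_or_ne a b
  · simp [sum_blockMatrix hG hH]
  · simp [hab]

lemma blockMatrix_transpose_mul_centredAxis (hG : ∀ a : G, a ^ 2 = 1)
    (hH : (Fintype.card {g : G // g ≠ 1} : F) = 1) (k : Fin 3 ⊕ Fin 3) :
    (blockMatrix F x)ᵀ * centredAxis F x k = 0 := by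
  have hconst (a : Fin 5) (g : {g : G // g ≠ 1}) : ((blockMatrix F x)ᵀ * axisMatrix F x k) a g =
      if blockOf k = a then axisGram F k k else 0 := by
    simp only [Matrix.mul_apply, Matrix.transpose_apply, mul_comm (blockMatrix F x _ _),
      axisMatrix_mul_blockMatrix]
    split_ifs <;> simp [sum_axisMatrix_right hG hH]
  ext a g
  rw [centredAxis, ← Matrix.mul_assoc, Matrix.mul_apply]
  simp only [hconst, ← Finset.mul_sum, sum_centering_right hH, mul_zero, Matrix.zero_apply]

/-- The columns of all matrices `centredAxis F x k`, side by side. -/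
def centredAxes (F : Type) [Field F] (x : XG G) :
    Matrix (XG G) ((Fin 3 ⊕ Fin 3) × {g : G // g ≠ 1}) F :=
  of fun y p => centredAxis F x p.1 y p.2

lemma DualE_mul_centredAxes :
    DualE F x 4 * centredAxes F x = centredAxes F x *
      (generalPart F blockOf ⊗ₖ (1 : Matrix {g : G // g ≠ 1} {g : G // g ≠ 1} F)) := by
  ext y ⟨k, g⟩
  have hleft : (DualE F x 4 * centredAxes F x) y (k, g) =
      (DualE F x 4 * centredAxis F x k) y g := rfl
  rw [hleft, generalPart, ← diagonal_one, diagonal_kronecker_diagonal, mul_diagonal,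
    centredAxis, ← Matrix.mul_assoc, DualE_mul_axisMatrix]
  split_ifs <;> simp [centredAxes, centredAxis]

theorem isFrame [CharP F 2] (hG : ∀ a : G, a ^ 2 = 1)
    (hH : (Fintype.card {g : G // g ≠ 1} : F) = 1) :
    IsFrame (generalPart F id) (blockGram F) (generalPart F blockOf) (axisGram F) (DualE F x 4)
      (blockMatrix F x) (centredAxes F x) (centering F {g : G // g ≠ 1}) := by
  have hE : (DualE F x 4)ᵀ = DualE F x 4 := by rw [DualE_eq_diagonal, diagonal_transpose]
  have hEU : DualE F x 4 * blockMatrix F x = blockMatrix F x * generalPart F id := by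
    ext y a
    rw [DualE_eq_diagonal, diagonal_mul, generalPart, mul_diagonal, mul_comm,
      blockMatrix_mul_blockMatrix]
    simp
  have hUW : (blockMatrix F x)ᵀ * centredAxes F x = 0 := by
    ext a ⟨k, g⟩
    exact congr_fun₂ (blockMatrix_transpose_mul_centredAxis hG hH k) a g
  exact
    { E_mul_E := by
        simp [DualE_eq_diagonal, blockMatrix_mul_blockMatrix]
      E_mul_U := hEU
      U_mul_E := by
        have := congr_arg transpose hEU
        rwa [transpose_mul, transpose_mul, hE, generalPart, diagonal_transpose] at this
      E_mul_W := DualE_mul_centredAxes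
      W_mul_E := by
        have := congr_arg transpose (DualE_mul_centredAxes (F := F) (x := x))
        rwa [transpose_mul, transpose_mul, hE, ← kroneckerMap_transpose, generalPart,
          diagonal_transpose, transpose_one] at this
      U_mul_U := blockMatrix_transpose_mul_self hG hH
      W_mul_W := by
        ext ⟨k, g⟩ ⟨l, h⟩
        exact congr_fun₂ (centredAxis_gram hG hH k l) g h
      U_mul_W := hUW
      W_mul_U := by
        have := congr_arg transpose hUW
        rwa [transpose_mul, transpose_transpose, transpose_zero] at this
      K_mul_K := centering_mul_centering hH }

end CentredAxes

section Expansion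

variable {R X ι κ H : Type*} [CommRing R] [Fintype ι] [DecidableEq ι]
  [Fintype κ] [DecidableEq κ] [Fintype H]

lemma range_form_le (E : Matrix X X R) (U : Matrix X ι R) (W : Matrix X (κ × H) R)
    (K : Matrix H H R) (N : Submodule R (Matrix X X R)) (hE : E ∈ N)
    (hU : ∀ i j : ι, U * (single i j 1 : Matrix ι ι R) * Uᵀ ∈ N)
    (hW : ∀ k l : κ, W * ((single k l 1 : Matrix κ κ R) ⊗ₖ K) * Wᵀ ∈ N) :
    LinearMap.range (form E U W K) ≤ N := by
  rintro _ ⟨⟨c, α, β⟩, rfl⟩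
  refine N.add_mem (N.add_mem (N.smul_mem c hE) ?_) ?_
  · induction α using Matrix.induction_on' with
    | h_zero => simp
    | h_add α α' hα hα' => simpa only [Matrix.mul_add, Matrix.add_mul] using N.add_mem hα hα'
    | h_std_basis i j r =>
      rw [← mul_one r, ← smul_eq_mul, ← smul_single, Matrix.mul_smul, Matrix.smul_mul]
      exact N.smul_mem r (hU i j)
  · induction β using Matrix.induction_on' with
    | h_zero => simp
    | h_add β β' hβ hβ' =>
      simpa only [add_kronecker, Matrix.mul_add, Matrix.add_mul] using N.add_mem hβ hβ'
    | h_std_basis k l r =>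
      rw [← mul_one r, ← smul_eq_mul, ← smul_single, smul_kronecker, Matrix.mul_smul,
        Matrix.smul_mul]
      exact N.smul_mem r (hW k l)

lemma mul_single_kronecker_mul_transpose (W : Matrix X (κ × H) R) (K : Matrix H H R) (k l : κ) :
    W * (single k l 1 ⊗ₖ K) * Wᵀ =
      W.submatrix id (Prod.mk k) * K * (W.submatrix id (Prod.mk l))ᵀ := by
  ext y z
  simp [Matrix.mul_apply, Fintype.sum_prod_type, single_apply, ite_and]

end Expansion

section Span

variable {F G : Type} [Field F] [Group G] [DecidableEq G] {x : XG G}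
  {k l : Fin 3 ⊕ Fin 3} {d : Fin 3}

lemma sum_DualE : ∑ a, DualE F x a = 1 := by
  ext y z
  obtain ⟨a, ha, -⟩ := existsUnique_rel x y
  simp [Matrix.sum_apply, DualE_eq_diagonal, diagonal_apply, blockMatrix_apply_of_rel ha,
    Matrix.one_apply]

lemma Adj_zero : Adj F 0 = (1 : Matrix (XG G) (XG G) F) := by
  ext y z
  simp [Adj, rel_zero, Matrix.one_apply]

lemma sum_Adj : ∑ b, Adj F b = AllOne F G := by
  ext y z
  obtain ⟨b, hb, huniq⟩ := existsUnique_rel y z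
  simp only [Matrix.sum_apply, Adj, AllOne, of_apply]
  rw [Fintype.sum_eq_single b fun c hc => if_neg (hc ∘ huniq c), if_pos hb]

/-- The adjacency matrix of the relation of having the same coordinate in direction `d`. -/
def sameCoord (F G : Type) [Field F] [Group G] [DecidableEq G] (d : Fin 3) :
    Matrix (XG G) (XG G) F :=
  of fun y z => if y.1 d = z.1 d then 1 else 0

lemma Adj_zero_add_Adj_line (d : Fin 3) : Adj F 0 + Adj F (line d) = sameCoord F G d := by
  ext y z
  obtain rfl | hyz := eq_or_ne y z
  · simp [Adj, sameCoord, rel_zero, rel_line]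
  · simp [Adj, sameCoord, rel_zero, rel_line, hyz]

variable [Fintype G]

lemma DualE_mul_mul_DualE_apply (a c : Fin 5) (N : Matrix (XG G) (XG G) F) (y z : XG G) :
    (DualE F x a * N * DualE F x c) y z = blockMatrix F x y a * N y z * blockMatrix F x z c := by
  rw [DualE_eq_diagonal, DualE_eq_diagonal, mul_diagonal, diagonal_mul]

lemma DualE_mul_mul_DualE_congr {a c : Fin 5} {M N : Matrix (XG G) (XG G) F}
    (h : ∀ y z, rel a x y → rel c x z → M y z = N y z) :
    DualE F x a * M * DualE F x c = DualE F x a * N * DualE F x c := by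
  ext y z
  rw [DualE_mul_mul_DualE_apply, DualE_mul_mul_DualE_apply]
  by_cases hy : rel a x y
  · by_cases hz : rel c x z
    · rw [h y z hy hz]
    · simp [blockMatrix, hz]
  · simp [blockMatrix, hy]

lemma blockMatrix_mul_single_mul_transpose (a c : Fin 5) :
    blockMatrix F x * (single a c 1 : Matrix (Fin 5) (Fin 5) F) * (blockMatrix F x)ᵀ =
      DualE F x a * AllOne F G * DualE F x c := by
  ext y z
  rw [DualE_mul_mul_DualE_apply]
  simp [Matrix.mul_apply, single_apply, ite_and, AllOne]

lemma axisMatrix_mul_transpose (hG : ∀ a : G, a ^ 2 = 1) (hk : IsAxis k d) (hl : IsAxis l d) :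
    axisMatrix F x k * (axisMatrix F x l)ᵀ =
      DualE F x (blockOf k) * sameCoord F G d * DualE F x (blockOf l) := by
  ext y z
  rw [DualE_mul_mul_DualE_apply, sameCoord, of_apply, Matrix.mul_apply]
  by_cases hy : rel (blockOf k) x y
  · by_cases hz : rel (blockOf l) x z
    · simp [axisMatrix_apply_of_rel hy, axisMatrix_apply_of_rel hz, blockMatrix, hy, hz,
        Pi.single_apply, ← coord_eq_coord_axis hG hk hy, ← coord_eq_coord_axis hG hl hz,
        coord_inj, eq_comm]
    · simp [axisMatrix_apply_of_not_rel hz, blockMatrix, hz]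
  · simp [axisMatrix_apply_of_not_rel hy, blockMatrix, hy]

lemma axisMatrix_mul_centering_mul_transpose (k l : Fin 3 ⊕ Fin 3) :
    axisMatrix F x k * centering F {g : G // g ≠ 1} * (axisMatrix F x l)ᵀ =
      axisMatrix F x k * (axisMatrix F x l)ᵀ -
        DualE F x (blockOf k) * AllOne F G * DualE F x (blockOf l) := by
  rw [centering, Matrix.mul_sub, Matrix.mul_one, Matrix.sub_mul]
  congr 1
  ext y z
  rw [DualE_mul_mul_DualE_apply, ← sum_axisMatrix, ← sum_axisMatrix, Matrix.mul_apply]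
  simp [Matrix.mul_apply, AllOne, Finset.mul_sum]

lemma centredAxes_mul_single_mul_transpose (hH : (Fintype.card {g : G // g ≠ 1} : F) = 1)
    (k l : Fin 3 ⊕ Fin 3) :
    centredAxes F x * (single k l 1 ⊗ₖ centering F {g : G // g ≠ 1}) * (centredAxes F x)ᵀ =
      axisMatrix F x k * (axisMatrix F x l)ᵀ -
        DualE F x (blockOf k) * AllOne F G * DualE F x (blockOf l) := by
  have hKK := centering_mul_centering hH
  have hcol (m : Fin 3 ⊕ Fin 3) :
      (centredAxes F x).submatrix id (Prod.mk m) = centredAxis F x m := rfl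
  rw [mul_single_kronecker_mul_transpose, hcol, hcol, centredAxis, centredAxis, transpose_mul,
    centering_transpose, Matrix.mul_assoc _ _ (centering F _), hKK, ← Matrix.mul_assoc,
    Matrix.mul_assoc _ _ (centering F _), hKK, axisMatrix_mul_centering_mul_transpose]

/-- The parametrization of the Terwilliger algebra by the coordinates of `isFrame`. -/
abbrev terwilligerForm (F : Type) [Field F] (x : XG G) :
    F × Matrix (Fin 5) (Fin 5) F × Matrix (Fin 3 ⊕ Fin 3) (Fin 3 ⊕ Fin 3) F →ₗ[F]
      Matrix (XG G) (XG G) F :=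
  form (DualE F x 4) (blockMatrix F x) (centredAxes F x) (centering F {g : G // g ≠ 1})

end Span

section UpperBound

variable {F G : Type} [Field F] [Group G] [Fintype G] [DecidableEq G] {x : XG G}

lemma block_mem_range (a c : Fin 5) :
    DualE F x a * AllOne F G * DualE F x c ∈ LinearMap.range (terwilligerForm F x) :=
  ⟨(0, single a c 1, 0), by simp [form, blockMatrix_mul_single_mul_transpose]⟩

lemma axisMatrix_mul_transpose_mem_range (hH : (Fintype.card {g : G // g ≠ 1} : F) = 1)
    (k l : Fin 3 ⊕ Fin 3) :
    axisMatrix F x k * (axisMatrix F x l)ᵀ ∈ LinearMap.range (terwilligerForm F x) := by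
  rw [← sub_add_cancel (axisMatrix F x k * (axisMatrix F x l)ᵀ)
    (DualE F x (blockOf k) * AllOne F G * DualE F x (blockOf l)),
    ← centredAxes_mul_single_mul_transpose hH]
  exact add_mem ⟨(0, 0, single k l 1), by simp [form]⟩ (block_mem_range _ _)

lemma DualE_mul_sameCoord_mul_DualE_mem_range (hG : ∀ a : G, a ^ 2 = 1)
    (hH : (Fintype.card {g : G // g ≠ 1} : F) = 1) (a c : Fin 5) (d : Fin 3) :
    DualE F x a * sameCoord F G d * DualE F x c ∈ LinearMap.range (terwilligerForm F x) := by
  have apply_ne {k : Fin 3 ⊕ Fin 3} (hk : IsAxis k d) {y : XG G} (hy : rel (blockOf k) x y) :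
      x.1 d ≠ y.1 d := coord_eq_one_iff.not.1 (coord_ne_one hk hy)
  obtain ha | ⟨k, rfl, hk⟩ := forall_eq_or_exists_isAxis x a d <;>
    obtain hc | ⟨l, rfl, hl⟩ := forall_eq_or_exists_isAxis x c d
  · rw [DualE_mul_mul_DualE_congr (M := sameCoord F G d) (N := AllOne F G) fun y z hy hz =>
      if_pos ((ha y hy).symm.trans (hc z hz))]
    exact block_mem_range a c
  · rw [DualE_mul_mul_DualE_congr (M := sameCoord F G d) (N := 0) fun y z hy hz =>
      if_neg fun hyz => apply_ne hl hz ((ha y hy).trans hyz)]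
    simp
  · rw [DualE_mul_mul_DualE_congr (M := sameCoord F G d) (N := 0) fun y z hy hz =>
      if_neg fun hyz => apply_ne hk hy ((hc z hz).trans hyz.symm)]
    simp
  · rw [← axisMatrix_mul_transpose hG hk hl]
    exact axisMatrix_mul_transpose_mem_range hH k l

lemma exists_DualE_mul_sameCoord_mul_DualE_eq {a : Fin 5} (ha : a ≠ 4) :
    ∃ d, DualE F x a * sameCoord F G d * DualE F x a = DualE F x a * 1 * DualE F x a := by
  obtain rfl | rfl | ⟨i, rfl⟩ := eq_zero_or_four_or_line a
  · refine ⟨0, DualE_mul_mul_DualE_congr fun y z hy hz => ?_⟩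
    obtain rfl := rel_zero.1 hy
    obtain rfl := rel_zero.1 hz
    simp [sameCoord]
  · contradiction
  · refine ⟨i + 1, DualE_mul_mul_DualE_congr fun y z hy hz => ?_⟩
    have hiff : y.1 (i + 1) = z.1 (i + 1) ↔ y = z :=
      ⟨eq_of_eq_of_eq (by simp) ((rel_line.1 hy).2.symm.trans (rel_line.1 hz).2),
        fun h => by rw [h]⟩
    simp [sameCoord, hiff, Matrix.one_apply]

lemma DualE_mul_DualE (a c : Fin 5) :
    DualE F x a * DualE F x c = if a = c then DualE F x a else 0 := by
  rw [DualE_eq_diagonal, DualE_eq_diagonal, diagonal_mul_diagonal]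
  simp only [blockMatrix_mul_blockMatrix]
  split_ifs <;> simp

lemma DualE_mem_range (hG : ∀ a : G, a ^ 2 = 1)
    (hH : (Fintype.card {g : G // g ≠ 1} : F) = 1) (a : Fin 5) :
    DualE F x a ∈ LinearMap.range (terwilligerForm F x) := by
  obtain rfl | ha := eq_or_ne a 4
  · exact ⟨(1, 0, 0), by simp [form]⟩
  · obtain ⟨d, hd⟩ := exists_DualE_mul_sameCoord_mul_DualE_eq (F := F) (x := x) ha
    have := DualE_mul_sameCoord_mul_DualE_mem_range (x := x) hG hH a a d
    rwa [hd, Matrix.mul_one, DualE_mul_DualE, if_pos rfl] at this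

lemma generator_mem_range (hG : ∀ a : G, a ^ 2 = 1)
    (hH : (Fintype.card {g : G // g ≠ 1} : F) = 1) (a b c : Fin 5) :
    DualE F x a * Adj F b * DualE F x c ∈ LinearMap.range (terwilligerForm F x) := by
  have hzero : DualE F x a * Adj F 0 * DualE F x c ∈ LinearMap.range (terwilligerForm F x) := by
    rw [Adj_zero, Matrix.mul_one, DualE_mul_DualE]
    split_ifs
    exacts [DualE_mem_range hG hH a, zero_mem _]
  have hline (d : Fin 3) :
      DualE F x a * Adj F (line d) * DualE F x c ∈ LinearMap.range (terwilligerForm F x) := by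
    rw [← add_sub_cancel_left (Adj F 0) (Adj F (line d)), Adj_zero_add_Adj_line, Matrix.mul_sub,
      Matrix.sub_mul]
    exact sub_mem (DualE_mul_sameCoord_mul_DualE_mem_range hG hH a c d) hzero
  obtain rfl | rfl | ⟨d, rfl⟩ := eq_zero_or_four_or_line b
  · exact hzero
  · have hsum : AllOne F G = Adj F 0 + ∑ d, Adj F (line d) + Adj F 4 := by
      rw [← sum_Adj, Fin.sum_univ_castSucc, Fin.sum_univ_succ]
      rfl
    rw [← add_sub_cancel_left (Adj F 0 + ∑ d, Adj F (line d)) (Adj F 4), ← hsum, Matrix.mul_sub,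
      Matrix.sub_mul, Matrix.mul_add, Matrix.add_mul, Matrix.mul_sum, Matrix.sum_mul]
    exact sub_mem (block_mem_range a c) (add_mem hzero (sum_mem fun d _ => hline d))
  · exact hline d

lemma toSubmodule_le_range [CharP F 2] (hG : ∀ a : G, a ^ 2 = 1)
    (hH : (Fintype.card {g : G // g ≠ 1} : F) = 1) :
    (TerwilligerAlg F G x).toSubmodule ≤ LinearMap.range (terwilligerForm F x) := by
  have one_mem : 1 ∈ LinearMap.range (terwilligerForm F x) := by
    rw [← sum_DualE]
    exact sum_mem fun a _ => DualE_mem_range hG hH a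
  intro t ht
  induction ht using Algebra.adjoin_induction with
  | mem t ht =>
    obtain ⟨a, b, c, rfl⟩ := ht
    exact generator_mem_range hG hH a b c
  | algebraMap c =>
    rw [Algebra.algebraMap_eq_smul_one]
    exact Submodule.smul_mem _ c one_mem
  | add s t _ _ hs ht => exact add_mem hs ht
  | mul s t _ _ hs ht =>
    obtain ⟨u, rfl⟩ := hs
    obtain ⟨v, rfl⟩ := ht
    exact ⟨_, form_coordMul (isFrame hG hH) u v⟩

end UpperBound

section LowerBound

variable {F G : Type} [Field F] [Group G] [Fintype G] [DecidableEq G] {x : XG G}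
  {k l : Fin 3 ⊕ Fin 3} {d : Fin 3}

lemma generator_mem (a b c : Fin 5) :
    DualE F x a * Adj F b * DualE F x c ∈ TerwilligerAlg F G x :=
  Algebra.subset_adjoin ⟨a, b, c, rfl⟩

lemma DualE_mem (a : Fin 5) : DualE F x a ∈ TerwilligerAlg F G x := by
  have := generator_mem (F := F) (x := x) a 0 a
  rwa [Adj_zero, Matrix.mul_one, DualE_mul_DualE, if_pos rfl] at this

lemma block_mem (a c : Fin 5) :
    DualE F x a * AllOne F G * DualE F x c ∈ TerwilligerAlg F G x := by
  rw [← sum_Adj, Matrix.mul_sum, Matrix.sum_mul]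
  exact sum_mem fun b _ => generator_mem a b c

lemma axisMatrix_mul_transpose_mem_of_isAxis (hG : ∀ a : G, a ^ 2 = 1) (hk : IsAxis k d)
    (hl : IsAxis l d) : axisMatrix F x k * (axisMatrix F x l)ᵀ ∈ TerwilligerAlg F G x := by
  rw [axisMatrix_mul_transpose hG hk hl, ← Adj_zero_add_Adj_line, Matrix.mul_add, Matrix.add_mul]
  exact add_mem (generator_mem _ _ _) (generator_mem _ _ _)

lemma exists_inl_isAxis (k l : Fin 3 ⊕ Fin 3) : ∃ i d e,
    (IsAxis k d ∧ IsAxis (.inl i) d) ∧ (IsAxis (.inl i) e ∧ IsAxis l e) := by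
  decide +revert

lemma axisMatrix_mul_transpose_mem (hG : ∀ a : G, a ^ 2 = 1) (k l : Fin 3 ⊕ Fin 3) :
    axisMatrix F x k * (axisMatrix F x l)ᵀ ∈ TerwilligerAlg F G x := by
  obtain ⟨i, d, e, ⟨hkd, hid⟩, hie, hle⟩ := exists_inl_isAxis k l
  have hprod : axisMatrix F x k * (axisMatrix F x l)ᵀ =
      axisMatrix F x k * (axisMatrix F x (.inl i))ᵀ *
        (axisMatrix F x (.inl i) * (axisMatrix F x l)ᵀ) := by
    rw [Matrix.mul_assoc, ← Matrix.mul_assoc _ᵀ, gram_inl, Matrix.one_mul]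
  rw [hprod]
  exact mul_mem (axisMatrix_mul_transpose_mem_of_isAxis hG hkd hid)
    (axisMatrix_mul_transpose_mem_of_isAxis hG hie hle)

lemma range_le_toSubmodule (hG : ∀ a : G, a ^ 2 = 1)
    (hH : (Fintype.card {g : G // g ≠ 1} : F) = 1) :
    LinearMap.range (terwilligerForm F x) ≤ (TerwilligerAlg F G x).toSubmodule := by
  refine range_form_le _ _ _ _ _ (DualE_mem 4) (fun a c => ?_) fun k l => ?_
  · rw [blockMatrix_mul_single_mul_transpose]
    exact block_mem a c
  · rw [centredAxes_mul_single_mul_transpose hH]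
    exact sub_mem (axisMatrix_mul_transpose_mem hG k l) (block_mem _ _)

lemma toSubmodule_eq_range [CharP F 2] (hG : ∀ a : G, a ^ 2 = 1)
    (hH : (Fintype.card {g : G // g ≠ 1} : F) = 1) :
    (TerwilligerAlg F G x).toSubmodule = LinearMap.range (terwilligerForm F x) :=
  le_antisymm (toSubmodule_le_range hG hH) (range_le_toSubmodule hG hH)

end LowerBound

section Nondegeneracy

variable {F G : Type} [Field F] [Group G] [Fintype G] [DecidableEq G]

lemma cast_card_ne_one [CharP F 2] [Nontrivial G] (hG : ∀ a : G, a ^ 2 = 1) :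
    (Fintype.card {g : G // g ≠ 1} : F) = 1 := by
  obtain ⟨g, hg⟩ := exists_ne (1 : G)
  have hcard : (Fintype.card G : F) = 0 := by
    rw [CharP.cast_eq_zero_iff F 2, ← orderOf_eq_prime (hG g) hg]
    exact orderOf_dvd_card
  simp [hcard, Nat.cast_pred Fintype.card_pos, CharTwo.neg_eq]

lemma DualE_four_mul_blockMatrix_ne_zero [Nontrivial {g : G // g ≠ 1}]
    (hG : ∀ a : G, a ^ 2 = 1) (x : XG G) : DualE F x 4 * blockMatrix F x ≠ 0 := by
  obtain ⟨⟨g, hg⟩, ⟨h, hh⟩, hgh⟩ := exists_pair_ne {g : G // g ≠ 1}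
  have h01 : (0 : Fin 3) ≠ 1 := by decide
  obtain ⟨y, ⟨rfl, rfl⟩, -⟩ := existsUnique_coord_eq h01 x g h
  have hy : rel 4 x y :=
    (rel_four_iff_coord_ne hG h01).2 ⟨hg, hh, fun h => hgh (Subtype.ext h)⟩
  intro h0
  have := congr_fun₂ h0 y 4
  simp [DualE_eq_diagonal, blockMatrix, hy] at this

end Nondegeneracy

end TerwilligerAlg

theorem stmt17 (F : Type) [Field F] (G : Type) [Group G] [Fintype G] [DecidableEq G]
    (hp : ringChar F = 2)
    (helem : ∀ a : G, a ^ 2 = 1) (hcard : 3 ≤ Fintype.card G)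
    (x : XG G) :
    ∃ φ : TerwilligerAlg F G x →ₐ[F]
        (Matrix (Fin 5) (Fin 5) F × Matrix (Fin 4) (Fin 4) F × F),
      Function.Surjective φ ∧
      ∃ m : ℕ, 1 ≤ m ∧
        ∀ f : Fin m → TerwilligerAlg F G x,
          (∀ j, φ (f j) = 0) → (List.ofFn f).prod = 0 := by
  have : CharP F 2 := ringChar.of_eq hp
  have : Nontrivial G := Fintype.one_lt_card_iff_nontrivial.1 (by lia)
  have : Nontrivial {g : G // g ≠ 1} := Fintype.one_lt_card_iff_nontrivial.1 <| by
    rw [Fintype.card_subtype_compl, Fintype.card_subtype_eq]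
    lia
  have hH : (Fintype.card {g : G // g ≠ 1} : F) = 1 := TerwilligerAlg.cast_card_ne_one helem
  obtain ⟨φ, hφ, hnil⟩ := TerwilligerAlg.exists_algHom_of_isFrame (TerwilligerAlg F G x)
    (TerwilligerAlg.blockFactorization F)
    ((TerwilligerAlg.axisFactorization F).reindex finSumFinEquiv.symm)
    (TerwilligerAlg.isFrame helem hH) (TerwilligerAlg.toSubmodule_eq_range helem hH)
    (TerwilligerAlg.blockGram_mul_generalPart F)
    (TerwilligerAlg.DualE_four_mul_blockMatrix_ne_zero helem x) TerwilligerAlg.centering_ne_zero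
  refine ⟨φ, hφ, 3, by decide, fun f hf => ?_⟩
  simpa [List.ofFn_succ, mul_assoc] using hnil _ _ _ (hf 0) (hf 1) (hf 2)
end

section
/- Assume G is an elementary abelian 2-group with |G| = n, the characteristic of F is neither 2 nor 3, and the image of n in F equals 4 (i.e. n ≡ 4 mod p where p = char F). Then there is a surjective F-algebra homomorphism from the Terwilliger F-algebra T onto M₅(F) × M₅(F) × F whose kernel K is a nilpotent two-sided ideal of T (there exists m ≥ 1 such that any product of m elements of K equals the zero matrix). Consequently T/Rad T ≅ M₅(F) ⊕ M₅(F) ⊕ M₁(F) as F-algebras, where Rad T = K is the Jacobson radical of T. -/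
open Matrix

/-!
Displacements from the base point turn each coordinate of a point into an element of `G`. Apart from
multiples of `E₄*`, the algebra `T` is spanned by products of two kinds of column vectors: the
indicators of the five relation classes around `x`, and six families of functions on a class which
depend on one coordinate, have sum zero and vanish at `1`, one family on each of `R₁`, `R₂`, `R₃`
and three on `R₄`. The two kinds are orthogonal to each other, so elements of `T` multiply through
two Gram matrices: the diagonal matrix of valencies for the indicators, and `famGram |G|` for the
families. The coefficient of `E₄*` is well defined because an alternating sum over the points whose
displacements permute a triple `a, b, ab` is orthogonal to all these columns.

If `|G| = 4` in `F`, the valencies `1, 3, 3, 3, 6` are invertible, while on `R₄` the sum of the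
three families spans the radical of the Gram matrix; the induced form on the five-dimensional
quotient has determinant `3`. The class part, the family part modulo this radical, and the
coefficient of `E₄*` give the map onto `M₅(F) × M₅(F) × F`. An element of its kernel is a family
part with coefficients `P` such that `famGram * P * famGram = 0`, so a product of three of them is
zero.
-/

open scoped Kronecker

theorem natCast_ne_zero_of_ringChar_ne {R : Type*} [NonAssocSemiring R] [Nontrivial R] {p : ℕ}
    (hp : p.Prime) (h : ringChar R ≠ p) : (p : R) ≠ 0 := fun h0 =>
  ((Nat.dvd_prime hp).1 ((ringChar.spec R p).1 h0)).elim CharP.ringChar_ne_one h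

section Algebra

variable {R A B M : Type*} [CommRing R] [Ring A] [Algebra R A] [Ring B] [Algebra R B]

theorem exists_algHom_of_ker_le_ker [AddCommGroup M] [Module R M]
    (N : M →ₗ[R] A) (ψ : M →ₗ[R] B) (S : Subalgebra R A)
    (hrange : LinearMap.range N = Subalgebra.toSubmodule S)
    (hker : LinearMap.ker N ≤ LinearMap.ker ψ) (hsurj : Function.Surjective ψ)
    (hmul : ∀ m m', ∃ m'', N m'' = N m * N m' ∧ ψ m'' = ψ m * ψ m') :
    ∃ φ : S →ₐ[R] B, Function.Surjective φ ∧ ∀ (m : M) (s : S), N m = s → φ s = ψ m := by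
  let φ₀ : S →ₗ[R] B := (LinearMap.ker N).liftQ ψ hker ∘ₗ
    N.quotKerEquivRange.symm.toLinearMap ∘ₗ (LinearEquiv.ofEq _ _ hrange.symm).toLinearMap
  have hφ₀ (m : M) (s : S) (hs : N m = s) : φ₀ s = ψ m := by
    have h : N.quotKerEquivRange.symm (LinearEquiv.ofEq _ _ hrange.symm s) =
        (LinearMap.ker N).mkQ m := by
      rw [LinearEquiv.symm_apply_eq]
      exact Subtype.ext hs.symm
    simp [φ₀, h]
  have hex (s : S) : ∃ m, N m = s := by
    rw [← LinearMap.mem_range, hrange]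
    exact s.2
  have hφ₀_mul (s t : S) : φ₀ (s * t) = φ₀ s * φ₀ t := by
    obtain ⟨m, hm⟩ := hex s
    obtain ⟨m', hm'⟩ := hex t
    obtain ⟨m'', hN, hψ⟩ := hmul m m'
    rw [hφ₀ m s hm, hφ₀ m' t hm', hφ₀ m'' (s * t) (by rw [hN, hm, hm']; rfl), hψ]
  have hφ₀_surj : Function.Surjective φ₀ := by
    intro b
    obtain ⟨m, rfl⟩ := hsurj b
    have hNm : N m ∈ S := by
      rw [← Subalgebra.mem_toSubmodule, ← hrange]
      exact LinearMap.mem_range_self N m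
    exact ⟨⟨N m, hNm⟩, hφ₀ m _ rfl⟩
  have hφ₀_one : φ₀ 1 = 1 := by
    obtain ⟨u, hu⟩ := hφ₀_surj 1
    simpa only [one_mul, hu, mul_one, eq_comm] using hφ₀_mul 1 u
  exact ⟨AlgHom.ofLinearMap φ₀ hφ₀_one hφ₀_mul, hφ₀_surj, hφ₀⟩

/-- The linear map `(c, P) ↦ c • e + P * g`. -/
def smulAddMul (e g : A) : R × A →ₗ[R] A :=
  (LinearMap.toSpanSingleton R A e).coprod (LinearMap.mulRight R g)

theorem smulAddMul_apply (e g : A) (c : R) (P : A) : smulAddMul e g (c, P) = c • e + P * g := rfl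

/-- The product on the coefficients `P` that makes `smulAddMul e g` multiplicative when `e` is an
idempotent commuting with `g`. -/
def twistedMul (e g : A) (c c' : R) (P P' : A) : A :=
  c • (e * P') + c' • (P * e) + P * g * P'

theorem smulAddMul_mul_smulAddMul {e g : A} (he : e * e = e) (heg : e * g = g * e)
    (c c' : R) (P P' : A) :
    smulAddMul e g (c, P) * smulAddMul e g (c', P') =
      smulAddMul e g (c * c', twistedMul e g c c' P P') := by
  have h : P * g * e = P * e * g := by rw [mul_assoc, ← heg, mul_assoc]
  simp only [smulAddMul_apply, twistedMul, add_mul, mul_add, smul_mul_assoc, mul_smul_comm, he, h,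
    ← mul_assoc]
  module

theorem smulAddMul_right_surjective {e g : A} (hg : IsUnit g) (c : R) :
    Function.Surjective fun P => smulAddMul e g (c, P) := by
  intro B
  obtain ⟨u, hu⟩ := hg.exists_left_inv
  refine ⟨(B - c • e) * u, ?_⟩
  simp only [smulAddMul_apply, mul_assoc, hu, mul_one, add_sub_cancel]

end Algebra

section Sandwich

variable {R l m n : Type*} [CommRing R] [Fintype n]

/-- The linear map `P ↦ A * P * Aᵀ`. -/
def sandwich (A : Matrix m n R) : Matrix n n R →ₗ[R] Matrix m m R where
  toFun P := A * P * Aᵀ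
  map_add' P Q := by rw [Matrix.mul_add, Matrix.add_mul]
  map_smul' c P := by simp

theorem sandwich_apply (A : Matrix m n R) (P : Matrix n n R) : sandwich A P = A * P * Aᵀ := rfl

theorem sandwich_sandwich [Fintype l] (A : Matrix m n R) (B : Matrix n l R) (P : Matrix l l R) :
    sandwich A (sandwich B P) = sandwich (A * B) P := by
  simp only [sandwich_apply, transpose_mul, Matrix.mul_assoc]

theorem mul_sandwich [Fintype m] {A : Matrix m n R} {E : Matrix m m R} {e : Matrix n n R}
    (h : E * A = A * e) (P : Matrix n n R) : E * sandwich A P = sandwich A (e * P) := by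
  simp only [sandwich_apply, ← Matrix.mul_assoc, h]

theorem sandwich_mul [Fintype m] {A : Matrix m n R} {E : Matrix m m R} {e : Matrix n n R}
    (hE : Eᵀ = E) (he : eᵀ = e) (h : E * A = A * e) (P : Matrix n n R) :
    sandwich A P * E = sandwich A (P * e) := by
  have h' : Aᵀ * E = e * Aᵀ := by simpa [hE, he] using congrArg transpose h
  simp only [sandwich_apply, Matrix.mul_assoc, h']

theorem sandwich_mul_sandwich [Fintype m] (A : Matrix m n R) (P Q : Matrix n n R) :
    sandwich A P * sandwich A Q = sandwich A (P * (Aᵀ * A) * Q) := by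
  simp only [sandwich_apply, Matrix.mul_assoc]

theorem sandwich_mul_sandwich_of_transpose_mul_eq_zero [Fintype l] [Fintype m] {A : Matrix m n R}
    {B : Matrix m l R} (h : Aᵀ * B = 0) (P : Matrix n n R) (Q : Matrix l l R) :
    sandwich A P * sandwich B Q = 0 := by
  rw [sandwich_apply, sandwich_apply, Matrix.mul_assoc, ← Matrix.mul_assoc Aᵀ,
    ← Matrix.mul_assoc Aᵀ, h]
  simp

end Sandwich

section MatrixUnits

variable {R M m n : Type*} [CommSemiring R] [AddCommMonoid M] [Module R M]

theorem map_mem_of_map_single_mem [Finite m] [Finite n] [DecidableEq m] [DecidableEq n]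
    (f : Matrix m n R →ₗ[R] M) (S : Submodule R M) (h : ∀ i j, f (single i j 1) ∈ S)
    (A : Matrix m n R) : f A ∈ S := by
  have := Fintype.ofFinite m
  have := Fintype.ofFinite n
  rw [matrix_eq_sum_single A, map_sum]
  refine sum_mem fun i _ => ?_
  rw [map_sum]
  refine sum_mem fun j _ => ?_
  rw [← mul_one (A i j), ← smul_eq_mul, ← smul_single, map_smul]
  exact S.smul_mem _ (h i j)

end MatrixUnits

theorem sum_perm_sign_mul_apply {α R : Type*} [Fintype α] [DecidableEq α] [CommRing R] {k l m : α}
    (hlm : l ≠ m) (hkl : k ≠ l) (hkm : k ≠ m) (h : α → R) :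
    ∑ σ : Equiv.Perm α, ((Equiv.Perm.sign σ : ℤ) : R) * h (σ k) = 0 := by
  refine Finset.sum_involution (fun σ _ => σ * Equiv.swap l m) (fun σ _ => ?_) (fun σ _ _ => ?_)
    (fun _ _ => Finset.mem_univ _) (fun σ _ => ?_)
  · simp [Equiv.Perm.sign_mul, Equiv.Perm.sign_swap hlm, Equiv.swap_apply_of_ne_of_ne hkl hkm]
  · simpa [Equiv.swap_eq_one_iff] using hlm
  · simp [mul_assoc]

theorem sum_ite_mul_ite {ι κ R : Type*} [Fintype ι] [DecidableEq κ] [NonUnitalNonAssocSemiring R]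
    (c : ι → κ) (a b : κ) (f f' : ι → R) :
    ∑ y, (if c y = a then f y else 0) * (if c y = b then f' y else 0) =
      if a = b then ∑ y with c y = a, f y * f' y else 0 := by
  split_ifs with hab
  · rw [← hab, Finset.sum_filter]
    refine Finset.sum_congr rfl fun y _ => ?_
    split_ifs <;> simp
  · refine Finset.sum_eq_zero fun y _ => ?_
    by_cases hy : c y = a <;> simp [hy, hab]

theorem exists_ne_one_ne_one_ne {G : Type*} [One G] [Fintype G] (hG : 3 ≤ Fintype.card G) :
    ∃ a b : G, a ≠ 1 ∧ b ≠ 1 ∧ a ≠ b := by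
  classical
  have h : 1 < (Finset.univ.erase (1 : G)).card := by
    rw [Finset.card_erase_of_mem (Finset.mem_univ 1), Finset.card_univ]
    omega
  obtain ⟨a, ha, b, hb, hab⟩ := Finset.one_lt_card.1 h
  exact ⟨a, b, Finset.ne_of_mem_erase ha, Finset.ne_of_mem_erase hb, hab⟩

section SumZeroProjection

variable (F : Type*) [Field F] {G : Type*} [Group G] [DecidableEq G]

/-- The indicator function of the nontrivial elements of `G`. -/
def nonOne (g : G) : F := if g = 1 then 0 else 1

variable (G) in
/-- The projection of `F^G` onto the functions that vanish at `1` and have sum zero; it is a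
projection when `|G| - 1` is invertible in `F`. -/
def sumZeroProj [Fintype G] : Matrix G G F :=
  diagonal (nonOne F) - ((Fintype.card G : F) - 1)⁻¹ • vecMulVec (nonOne F) (nonOne F)

theorem ite_eq_one_eq_one_sub_nonOne (g : G) : (if g = 1 then 1 else 0) = 1 - nonOne F g := by
  simp only [nonOne]
  split_ifs <;> simp

variable [Fintype G]

theorem sum_nonOne : ∑ g : G, nonOne F g = (Fintype.card G : F) - 1 := by
  have h : ∑ g : G, (if g = 1 then (1 : F) else 0) = 1 := by simp
  simp only [ite_eq_one_eq_one_sub_nonOne, Finset.sum_sub_distrib, Finset.sum_const,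
    Finset.card_univ, nsmul_one] at h
  linear_combination -h

variable {F}

theorem sumZeroProj_apply (g h : G) :
    sumZeroProj F G g h = (if g = h then nonOne F g else 0) -
      ((Fintype.card G : F) - 1)⁻¹ * (nonOne F g * nonOne F h) := by
  simp [sumZeroProj, diagonal_apply, vecMulVec_apply]

theorem transpose_sumZeroProj : (sumZeroProj F G)ᵀ = sumZeroProj F G := by
  simp [sumZeroProj]

theorem sumZeroProj_one_left (g : G) : sumZeroProj F G 1 g = 0 := by
  simp [sumZeroProj_apply, nonOne]

theorem sum_sumZeroProj (hn : (Fintype.card G : F) ≠ 1) (g : G) :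
    ∑ u, sumZeroProj F G u g = 0 := by
  have hn' : (Fintype.card G : F) - 1 ≠ 0 := sub_ne_zero.2 hn
  simp [sumZeroProj_apply, ← Finset.mul_sum, ← Finset.sum_mul, sum_nonOne, hn']

theorem sumZeroProj_mul_self (hn : (Fintype.card G : F) ≠ 1) :
    sumZeroProj F G * sumZeroProj F G = sumZeroProj F G := by
  have hp (g u : G) : nonOne F g * sumZeroProj F G g u = sumZeroProj F G g u := by
    by_cases hg : g = 1
    · rw [hg, sumZeroProj_one_left, mul_zero]
    · rw [nonOne, if_neg hg, one_mul]
  ext g h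
  have hsum : ∑ u, nonOne F u * sumZeroProj F G u h = 0 := by
    simp only [hp, sum_sumZeroProj hn]
  calc
    ∑ u, sumZeroProj F G g u * sumZeroProj F G u h
      = ∑ u, ((if g = u then nonOne F g * sumZeroProj F G u h else 0) -
          ((Fintype.card G : F) - 1)⁻¹ * nonOne F g * (nonOne F u * sumZeroProj F G u h)) :=
        Finset.sum_congr rfl fun u _ => by
          rw [sumZeroProj_apply g u, sub_mul, ite_mul, zero_mul]
          ring
    _ = sumZeroProj F G g h := by
      rw [Finset.sum_sub_distrib, ← Finset.mul_sum, hsum, Finset.sum_ite_eq]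
      simp [hp]

theorem sum_sumZeroProj_mul_sumZeroProj (hn : (Fintype.card G : F) ≠ 1) (g h : G) :
    ∑ u, sumZeroProj F G u g * sumZeroProj F G u h = sumZeroProj F G g h := by
  have hmul : (sumZeroProj F G)ᵀ * sumZeroProj F G = sumZeroProj F G := by
    rw [transpose_sumZeroProj, sumZeroProj_mul_self hn]
  simpa only [mul_apply, transpose_apply] using congrFun₂ hmul g h

theorem ite_eq_eq_sumZeroProj_add (g h : G) :
    (if g = h then (1 : F) else 0) = sumZeroProj F G g h + ((1 - nonOne F g) * (1 - nonOne F h) +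
      ((Fintype.card G : F) - 1)⁻¹ * (nonOne F g * nonOne F h)) := by
  rw [sumZeroProj_apply]
  by_cases hg : g = 1 <;> by_cases hh : h = 1 <;> simp [nonOne, hg, hh, Ne.symm]

theorem sumZeroProj_ne_zero (hn : (Fintype.card G : F) ≠ 1) (hcard : 3 ≤ Fintype.card G) :
    sumZeroProj F G ≠ 0 := by
  intro h0
  have hn' : (Fintype.card G : F) - 1 ≠ 0 := sub_ne_zero.2 hn
  obtain ⟨a, b, ha, hb, hab⟩ := exists_ne_one_ne_one_ne hcard
  have h := congrFun₂ h0 a b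
  simp [sumZeroProj_apply, nonOne, ha, hb, hab, hn'] at h

end SumZeroProjection

section Points

variable {G : Type} [Group G]

theorem commute_of_forall_sq_eq_one (hG : ∀ a : G, a ^ 2 = 1) (a b : G) : Commute a b :=
  Commute.of_orderOf_dvd_two (fun g => orderOf_dvd_of_pow_eq_one (hG g)) a b

theorem eq_of_mul_eq_one_of_forall_sq_eq_one (hG : ∀ a : G, a ^ 2 = 1) {a b : G}
    (h : a * b = 1) : a = b := by
  rw [eq_inv_of_mul_eq_one_left h, inv_eq_of_mul_eq_one_right (by rw [← sq, hG])]

theorem eq_of_coord_eq {y z : XG G} {k l : Fin 3} (hkl : k ≠ l) (hk : y.1 k = z.1 k)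
    (hl : y.1 l = z.1 l) : y = z := by
  have h0 (h : y.1 0 = z.1 0) : y.1 1 = z.1 1 ↔ y.1 2 = z.1 2 := by
    rw [← y.2, ← z.2, h, mul_right_inj]
  have h1 (h : y.1 1 = z.1 1) : y.1 0 = z.1 0 ↔ y.1 2 = z.1 2 := by
    rw [← y.2, ← z.2, h, mul_left_inj]
  refine Subtype.ext (funext fun i => ?_)
  fin_cases k <;> fin_cases l <;> fin_cases i <;> grind

/-- The element of `G` by which the `k`-th coordinate of `y` differs from that of the base point
`x`. -/
def displacement (x y : XG G) (k : Fin 3) : G := y.1 k * (x.1 k)⁻¹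

@[simp]
theorem displacement_self (x : XG G) (k : Fin 3) : displacement x x k = 1 :=
  mul_inv_cancel _

theorem displacement_eq_one {x y : XG G} {k : Fin 3} :
    displacement x y k = 1 ↔ x.1 k = y.1 k := by
  rw [displacement, mul_inv_eq_one, eq_comm]

theorem displacement_inj {x y z : XG G} {k : Fin 3} :
    displacement x y k = displacement x z k ↔ y.1 k = z.1 k :=
  mul_left_inj _

theorem displacement_zero_mul_displacement_one (hG : ∀ a : G, a ^ 2 = 1) (x y : XG G) :
    displacement x y 0 * displacement x y 1 = displacement x y 2 := by
  simp only [displacement, ← x.2, ← y.2, _root_.mul_inv_rev, mul_assoc,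
    (commute_of_forall_sq_eq_one hG (x.1 0)⁻¹ (y.1 1 * (x.1 1)⁻¹)).eq]

theorem displacement_eq_of_displacement_eq_one (hG : ∀ a : G, a ^ 2 = 1) {x y : XG G}
    {i j k : Fin 3} (hk : displacement x y k = 1) (hi : i ≠ k) (hj : j ≠ k) :
    displacement x y i = displacement x y j := by
  have hmul := displacement_zero_mul_displacement_one hG x y
  have hinv (a b : G) : a * b = 1 → a = b := eq_of_mul_eq_one_of_forall_sq_eq_one hG
  generalize displacement x y = d at *
  fin_cases k <;> fin_cases i <;> fin_cases j <;> grind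

theorem displacement_pair_bijective [Finite G] (x : XG G) {k l : Fin 3} (hkl : k ≠ l) :
    Function.Bijective fun y : XG G => (displacement x y k, displacement x y l) := by
  have hcard : Nat.card (XG G) = Nat.card (G × G) :=
    Nat.card_eq_of_bijective (fun y : XG G => (y.1 0, y.1 1))
      ⟨fun y z h => eq_of_coord_eq zero_ne_one (Prod.ext_iff.1 h).1 (Prod.ext_iff.1 h).2,
        fun ab => ⟨⟨![ab.1, ab.2, ab.1 * ab.2], rfl⟩, rfl⟩⟩
  refine Function.Injective.bijective_of_nat_card_le (fun y z h => ?_) hcard.ge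
  simp only [Prod.mk.injEq, displacement_inj] at h
  exact eq_of_coord_eq hkl h.1 h.2

theorem sum_displacement_pair [Fintype G] [DecidableEq G] {R : Type*} [AddCommMonoid R] (x : XG G)
    {k l : Fin 3} (hkl : k ≠ l) (f : G → G → R) :
    ∑ y : XG G, f (displacement x y k) (displacement x y l) = ∑ a, ∑ b, f a b :=
  ((displacement_pair_bijective x hkl).sum_comp fun ab : G × G => f ab.1 ab.2).trans
    (Fintype.sum_prod_type _)

end Points

section Classes

variable {G : Type} [Group G] [DecidableEq G]

/-- The index `k + 1` of the relation `R_{k+1}`; its pairs agree exactly in the coordinate which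
is numbered `k` here. -/
def lineClass (k : Fin 3) : Fin 5 := k.succ.castSucc

theorem lineClass_inj {k l : Fin 3} : lineClass k = lineClass l ↔ k = l := by
  decide +revert

theorem lineClass_ne_four (k : Fin 3) : lineClass k ≠ 4 := by
  decide +revert

/-- The index of the relation that contains the pair `(y, z)`. -/
def classOf (y z : XG G) : Fin 5 :=
  if y = z then 0 else if y.1 0 = z.1 0 then 1 else if y.1 1 = z.1 1 then 2
  else if y.1 2 = z.1 2 then 3 else 4

theorem rel_iff_classOf_eq {i : Fin 5} {y z : XG G} : rel i y z ↔ classOf y z = i := by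
  have h01 := @eq_of_coord_eq G _ y z 0 1 (by decide)
  have h02 := @eq_of_coord_eq G _ y z 0 2 (by decide)
  have h12 := @eq_of_coord_eq G _ y z 1 2 (by decide)
  have hforall (p : Fin 3 → Prop) : (∀ k, p k) ↔ p 0 ∧ p 1 ∧ p 2 := by simp [Fin.forall_fin_succ]
  fin_cases i <;> simp only [rel, classOf, cIdx, hforall] <;> grind

theorem classOf_eq_zero {y z : XG G} : classOf y z = 0 ↔ y = z := by
  simp [← rel_iff_classOf_eq, rel]

theorem classOf_eq_four {y z : XG G} : classOf y z = 4 ↔ ∀ k, y.1 k ≠ z.1 k := by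
  simp [← rel_iff_classOf_eq, rel]

theorem classOf_eq_lineClass {y z : XG G} {k : Fin 3} :
    classOf y z = lineClass k ↔ y ≠ z ∧ y.1 k = z.1 k := by
  rw [← rel_iff_classOf_eq]
  fin_cases k <;> simp [rel, lineClass, cIdx]

theorem classOf_eq_lineClass_iff_displacement {x y : XG G} {i k : Fin 3} (hik : i ≠ k) :
    classOf x y = lineClass k ↔ displacement x y k = 1 ∧ displacement x y i ≠ 1 := by
  simp only [classOf_eq_lineClass, ne_eq, displacement_eq_one]
  refine ⟨fun h => ⟨h.2, fun hi => h.1 (eq_of_coord_eq hik hi h.2)⟩, fun h => ⟨?_, h.1⟩⟩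
  rintro rfl
  exact h.2 rfl

variable [Fintype G] {R : Type*}

theorem sum_classOf_eq_zero [AddCommMonoid R] (x : XG G) (f : XG G → R) :
    ∑ y with classOf x y = 0, f y = f x := by
  simp [classOf_eq_zero, Finset.sum_filter]

variable [AddCommGroup R]

theorem sum_classOf_eq_lineClass (x : XG G) {i k : Fin 3} (hik : i ≠ k) (f : G → R) :
    ∑ y with classOf x y = lineClass k, f (displacement x y i) = ∑ g, f g - f 1 := by
  calc
    _ = ∑ y, if displacement x y k = 1 ∧ displacement x y i ≠ 1 then f (displacement x y i)
          else 0 := by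
      simp only [Finset.sum_filter, classOf_eq_lineClass_iff_displacement hik]
    _ = ∑ a, ∑ b, if a = 1 ∧ b ≠ 1 then f b else 0 :=
      sum_displacement_pair x hik.symm fun a b => if a = 1 ∧ b ≠ 1 then f b else 0
    _ = ∑ g, f g - f 1 := by
      simp [ite_and, Finset.sum_ite, Finset.filter_ne']

theorem sum_classOf_eq_four (x : XG G) (f : XG G → R) :
    ∑ y with classOf x y = 4, f y =
      ∑ y, f y - f x - ∑ k, ∑ y with classOf x y = lineClass k, f y := by
  rw [← Finset.sum_fiberwise Finset.univ (classOf x) f, Fin.sum_univ_five, Fin.sum_univ_three,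
    sum_classOf_eq_zero]
  change _ = _ - _ - (∑ y with classOf x y = 1, f y + ∑ y with classOf x y = 2, f y +
    ∑ y with classOf x y = 3, f y)
  abel

end Classes

section ClassSums

variable {F G : Type} [Field F] [Group G] [DecidableEq G] [Fintype G]

theorem sum_classOf_sumZeroProj (hn : (Fintype.card G : F) ≠ 1) (x : XG G) (c : Fin 5)
    (i : Fin 3) (g : G) :
    ∑ y with classOf x y = c, sumZeroProj F G (displacement x y i) g = 0 := by
  have hline (k : Fin 3) :
      ∑ y with classOf x y = lineClass k, sumZeroProj F G (displacement x y i) g = 0 := by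
    by_cases hik : i = k
    · refine Finset.sum_eq_zero fun y hy => ?_
      rw [hik, displacement_eq_one.2 (classOf_eq_lineClass.1 (Finset.mem_filter.1 hy).2).2,
        sumZeroProj_one_left]
    · rw [sum_classOf_eq_lineClass x hik (sumZeroProj F G · g), sum_sumZeroProj hn,
        sumZeroProj_one_left, sub_zero]
  have hzero : ∑ y with classOf x y = 0, sumZeroProj F G (displacement x y i) g = 0 := by
    rw [sum_classOf_eq_zero, displacement_self, sumZeroProj_one_left]
  have htotal : ∑ y, sumZeroProj F G (displacement x y i) g = 0 := by
    obtain ⟨j, hij⟩ := exists_ne i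
    rw [sum_displacement_pair x hij.symm fun a _ => sumZeroProj F G a g, Finset.sum_comm]
    simp only [sum_sumZeroProj hn, Finset.sum_const_zero]
  fin_cases c
  · exact hzero
  · exact hline 0
  · exact hline 1
  · exact hline 2
  · refine (sum_classOf_eq_four x _).trans ?_
    simp only [htotal, displacement_self, sumZeroProj_one_left, hline, Finset.sum_const_zero,
      sub_zero]

theorem sum_classOf_lineClass_sumZeroProj_mul (hG : ∀ a : G, a ^ 2 = 1)
    (hn : (Fintype.card G : F) ≠ 1) (x : XG G) (i j k : Fin 3) (g h : G) :
    ∑ y with classOf x y = lineClass k,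
        sumZeroProj F G (displacement x y i) g * sumZeroProj F G (displacement x y j) h =
      if k = i ∨ k = j then 0 else sumZeroProj F G g h := by
  have hk {y : XG G} (hy : y ∈ ({y | classOf x y = lineClass k} : Finset (XG G))) :
      displacement x y k = 1 :=
    displacement_eq_one.2 (classOf_eq_lineClass.1 (Finset.mem_filter.1 hy).2).2
  split_ifs with hkij
  · refine Finset.sum_eq_zero fun y hy => ?_
    rcases hkij with rfl | rfl <;> simp only [hk hy, sumZeroProj_one_left, zero_mul, mul_zero]
  · obtain ⟨hi, hj⟩ := not_or.1 hkij
    calc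
      _ = ∑ y with classOf x y = lineClass k,
            sumZeroProj F G (displacement x y i) g * sumZeroProj F G (displacement x y i) h :=
        Finset.sum_congr rfl fun y hy => by
          rw [displacement_eq_of_displacement_eq_one hG (hk hy) (Ne.symm hj) (Ne.symm hi)]
      _ = sumZeroProj F G g h := by
        rw [sum_classOf_eq_lineClass x (Ne.symm hi)
            fun u => sumZeroProj F G u g * sumZeroProj F G u h,
          sum_sumZeroProj_mul_sumZeroProj hn, sumZeroProj_one_left, zero_mul, sub_zero]

theorem sum_sumZeroProj_displacement_mul (hn : (Fintype.card G : F) ≠ 1) (x : XG G)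
    (i j : Fin 3) (g h : G) :
    ∑ y, sumZeroProj F G (displacement x y i) g * sumZeroProj F G (displacement x y j) h =
      if i = j then Fintype.card G * sumZeroProj F G g h else 0 := by
  split_ifs with hij
  · obtain ⟨k, hik⟩ := exists_ne i
    rw [← hij, sum_displacement_pair x hik.symm
      fun a _ => sumZeroProj F G a g * sumZeroProj F G a h, Finset.sum_comm]
    simp only [sum_sumZeroProj_mul_sumZeroProj hn, Finset.sum_const, Finset.card_univ, nsmul_eq_mul]
  · rw [sum_displacement_pair x hij fun a b => sumZeroProj F G a g * sumZeroProj F G b h]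
    simp only [← Finset.mul_sum, sum_sumZeroProj hn, mul_zero, Finset.sum_const_zero]

theorem sum_classOf_four_sumZeroProj_mul (hG : ∀ a : G, a ^ 2 = 1)
    (hn : (Fintype.card G : F) ≠ 1) (x : XG G) (i j : Fin 3) (g h : G) :
    ∑ y with classOf x y = 4,
        sumZeroProj F G (displacement x y i) g * sumZeroProj F G (displacement x y j) h =
      ((if i = j then (Fintype.card G : F) - 1 else 0) - 1) * sumZeroProj F G g h := by
  rw [sum_classOf_eq_four, sum_sumZeroProj_displacement_mul hn, displacement_self,
    sumZeroProj_one_left]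
  simp only [sum_classOf_lineClass_sumZeroProj_mul hG hn, Fin.sum_univ_three]
  fin_cases i <;> fin_cases j <;> grind

end ClassSums

section Families

variable {F G : Type} [Field F]

/-- The index type of the families of columns of `famMatrix`: `Sum.inl k` is the family carried by
the relation `R_{k+1}`, and `Sum.inr k` is the family on `R₄` that depends on coordinate `k`. -/
abbrev FamIndex : Type := Fin 3 ⊕ Fin 3

/-- The relation class on which the family of columns `α` of `famMatrix` is supported. -/
def famClass : FamIndex → Fin 5 := Sum.elim lineClass fun _ => 4

/-- The coordinate through which the columns of `famMatrix` in the family `α` see a point. On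
`R_{k+1}` any coordinate other than `k` would do. -/
def famCoord : FamIndex → Fin 3 := Sum.elim (· + 1) id

/-- The Gram matrix of the six families, for `|G| = q`. -/
def famGram (q : F) : Matrix FamIndex FamIndex F :=
  fromBlocks 1 0 0 (Matrix.of fun i j => (if i = j then q - 1 else 0) - 1)

/-- The sizes of the classes `R₀, …, R₄` seen from a point, for `|G| = q`. -/
def valency (q : F) : Fin 5 → F := ![1, q - 1, q - 1, q - 1, (q - 1) * (q - 2)]

/-- The diagonal projection onto the families supported on the relation class `i`. -/
def famProj (F : Type) [Field F] (i : Fin 5) : Matrix FamIndex FamIndex F :=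
  diagonal fun α => if famClass α = i then 1 else 0

/-- The diagonal projection onto the relation class `i`. -/
def classProj (F : Type) [Field F] (i : Fin 5) : Matrix (Fin 5) (Fin 5) F :=
  diagonal fun j => if j = i then 1 else 0

variable [Group G] [DecidableEq G]

variable (F) in
/-- The matrix whose column `i` is the indicator of the `i`-th relation class around `x`. -/
def classMatrix (x : XG G) : Matrix (XG G) (Fin 5) F :=
  Matrix.of fun y i => if classOf x y = i then 1 else 0

theorem DualE_eq_diagonal (x : XG G) (i : Fin 5) :
    DualE F x i = diagonal fun y => if classOf x y = i then 1 else 0 := by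
  ext y z
  simp [DualE, diagonal_apply, rel_iff_classOf_eq, ite_and]

theorem transpose_DualE (x : XG G) (i : Fin 5) : (DualE F x i)ᵀ = DualE F x i := by
  rw [DualE_eq_diagonal, diagonal_transpose]

variable [Fintype G]

variable (F) in
/-- The matrix whose columns are, for each of the six families, the restriction to the class
`famClass α` of the functions on `G` with sum zero that vanish at `1`, pulled back along the
displacement from `x` in the coordinate `famCoord α`. -/
def famMatrix (x : XG G) : Matrix (XG G) (FamIndex × G) F :=
  Matrix.of fun y αg => if classOf x y = famClass αg.1 then
    sumZeroProj F G (displacement x y (famCoord αg.1)) αg.2 else 0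

theorem DualE_mul_self (x : XG G) (i : Fin 5) : DualE F x i * DualE F x i = DualE F x i := by
  simp [DualE_eq_diagonal]

theorem DualE_mul_classMatrix (x : XG G) (i : Fin 5) :
    DualE F x i * classMatrix F x = classMatrix F x * classProj F i := by
  ext y j
  rw [classProj, DualE_eq_diagonal, diagonal_mul, mul_diagonal]
  by_cases h : classOf x y = j <;> simp [classMatrix, h]

theorem DualE_mul_famMatrix (x : XG G) (i : Fin 5) :
    DualE F x i * famMatrix F x = famMatrix F x * (famProj F i ⊗ₖ (1 : Matrix G G F)) := by
  ext y ⟨α, g⟩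
  rw [famProj, DualE_eq_diagonal, ← diagonal_one, diagonal_kronecker_diagonal, diagonal_mul,
    mul_diagonal]
  by_cases h : classOf x y = famClass α <;> simp [famMatrix, h]

theorem card_classOf_eq (x : XG G) (c : Fin 5) :
    ∑ y with classOf x y = c, (1 : F) = valency (Fintype.card G : F) c := by
  have hline (k : Fin 3) :
      ∑ y with classOf x y = lineClass k, (1 : F) = (Fintype.card G : F) - 1 := by
    simpa using sum_classOf_eq_lineClass x (exists_ne k).choose_spec fun _ => (1 : F)
  have htotal : ∑ _ : XG G, (1 : F) = Fintype.card G * Fintype.card G := by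
    simpa using sum_displacement_pair x (zero_ne_one (α := Fin 3)) fun _ _ => (1 : F)
  fin_cases c
  · exact sum_classOf_eq_zero x _
  · exact hline 0
  · exact hline 1
  · exact hline 2
  · refine (sum_classOf_eq_four x _).trans ?_
    simp only [htotal, hline, Fin.sum_univ_three]
    change _ = ((Fintype.card G : F) - 1) * (Fintype.card G - 2)
    ring

theorem transpose_classMatrix_mul_classMatrix (x : XG G) :
    (classMatrix F x)ᵀ * classMatrix F x = diagonal (valency (Fintype.card G : F)) := by
  ext i j
  refine (sum_ite_mul_ite (classOf x) i j 1 1).trans ?_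
  simp only [Pi.one_apply, mul_one, card_classOf_eq, diagonal_apply]

theorem transpose_famMatrix_mul_classMatrix (hn : (Fintype.card G : F) ≠ 1) (x : XG G) :
    (famMatrix F x)ᵀ * classMatrix F x = 0 := by
  ext ⟨α, g⟩ i
  refine (sum_ite_mul_ite (classOf x) (famClass α) i _ 1).trans ?_
  simp only [Pi.one_apply, mul_one, sum_classOf_sumZeroProj hn, ite_self, Matrix.zero_apply]

theorem transpose_famMatrix_mul_famMatrix (hG : ∀ a : G, a ^ 2 = 1)
    (hn : (Fintype.card G : F) ≠ 1) (x : XG G) :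
    (famMatrix F x)ᵀ * famMatrix F x = famGram (Fintype.card G : F) ⊗ₖ sumZeroProj F G := by
  have hadd (k : Fin 3) : k ≠ k + 1 := by
    decide +revert
  ext ⟨α, g⟩ ⟨β, h⟩
  refine (sum_ite_mul_ite (classOf x) (famClass α) (famClass β) _ _).trans ?_
  rw [kronecker_apply]
  rcases α with k | i <;> rcases β with l | j
  · by_cases hkl : k = l <;>
      simp [famClass, famCoord, famGram, one_apply, lineClass_inj, hkl, hadd,
        sum_classOf_lineClass_sumZeroProj_mul hG hn]
  · simp [famClass, famGram, lineClass_ne_four]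
  · simp [famClass, famGram, (lineClass_ne_four _).symm]
  · exact (if_pos rfl).trans (sum_classOf_four_sumZeroProj_mul hG hn x i j g h)

theorem famMatrix_mul_one_kronecker_sumZeroProj (hn : (Fintype.card G : F) ≠ 1) (x : XG G) :
    famMatrix F x * ((1 : Matrix FamIndex FamIndex F) ⊗ₖ sumZeroProj F G) =
      famMatrix F x := by
  ext y ⟨α, g⟩
  have hmul (u : G) : ∑ h, sumZeroProj F G u h * sumZeroProj F G h g = sumZeroProj F G u g := by
    rw [← mul_apply, sumZeroProj_mul_self hn]
  simp only [mul_apply, Fintype.sum_prod_type, kronecker_apply, one_apply]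
  rw [Finset.sum_eq_single α (fun β _ hβ => by simp [hβ]) (by simp)]
  simp [famMatrix, hmul]

end Families

section NormalForm

variable {F G : Type} [Field F] [Group G] [DecidableEq G] [Fintype G]

/-- The part of the normal form of `T` which is spanned by products of columns of `famMatrix`; the
coefficient `P α β` belongs to the families `α` and `β`. -/
def famPart (x : XG G) : Matrix FamIndex FamIndex F →ₗ[F] Matrix (XG G) (XG G) F :=
  sandwich (famMatrix F x) ∘ₗ (kroneckerBilinear (R := F) (α := F)).flip (1 : Matrix G G F)

/-- The part of the normal form of `T` which is constant on products of relation classes. -/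
def classPart (x : XG G) : Matrix (Fin 5) (Fin 5) F →ₗ[F] Matrix (XG G) (XG G) F :=
  sandwich (classMatrix F x)

theorem famPart_apply (x : XG G) (P : Matrix FamIndex FamIndex F) :
    famPart x P = sandwich (famMatrix F x) (P ⊗ₖ 1) := rfl

theorem sandwich_famMatrix_kronecker_sumZeroProj (hn : (Fintype.card G : F) ≠ 1) (x : XG G)
    (P : Matrix FamIndex FamIndex F) :
    sandwich (famMatrix F x) (P ⊗ₖ sumZeroProj F G) = famPart x P := by
  have h : P ⊗ₖ sumZeroProj F G =
      ((1 : Matrix FamIndex FamIndex F) ⊗ₖ sumZeroProj F G) * (P ⊗ₖ 1) := by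
    rw [← mul_kronecker_mul, Matrix.one_mul, Matrix.mul_one]
  rw [famPart_apply, sandwich_apply, h, ← Matrix.mul_assoc (famMatrix F x),
    famMatrix_mul_one_kronecker_sumZeroProj hn, sandwich_apply]

theorem famPart_mul_famPart (hG : ∀ a : G, a ^ 2 = 1) (hn : (Fintype.card G : F) ≠ 1) (x : XG G)
    (P P' : Matrix FamIndex FamIndex F) :
    famPart x P * famPart x P' = famPart x (P * famGram (Fintype.card G : F) * P') := by
  rw [famPart_apply, famPart_apply, sandwich_mul_sandwich, transpose_famMatrix_mul_famMatrix hG hn,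
    ← mul_kronecker_mul, ← mul_kronecker_mul, Matrix.one_mul, Matrix.mul_one,
    sandwich_famMatrix_kronecker_sumZeroProj hn]

theorem classPart_mul_classPart (x : XG G) (Q Q' : Matrix (Fin 5) (Fin 5) F) :
    classPart x Q * classPart x Q' =
      classPart x (Q * diagonal (valency (Fintype.card G : F)) * Q') := by
  rw [classPart, sandwich_mul_sandwich, transpose_classMatrix_mul_classMatrix]

theorem famPart_mul_classPart (hn : (Fintype.card G : F) ≠ 1) (x : XG G)
    (P : Matrix FamIndex FamIndex F) (Q : Matrix (Fin 5) (Fin 5) F) :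
    famPart x P * classPart x Q = 0 :=
  sandwich_mul_sandwich_of_transpose_mul_eq_zero (transpose_famMatrix_mul_classMatrix hn x) _ _

theorem classPart_mul_famPart (hn : (Fintype.card G : F) ≠ 1) (x : XG G)
    (P : Matrix FamIndex FamIndex F) (Q : Matrix (Fin 5) (Fin 5) F) :
    classPart x Q * famPart x P = 0 := by
  refine sandwich_mul_sandwich_of_transpose_mul_eq_zero ?_ _ _
  rw [← transpose_transpose (famMatrix F x), ← transpose_mul,
    transpose_famMatrix_mul_classMatrix hn, transpose_zero]

theorem DualE_mul_famPart (x : XG G) (i : Fin 5) (P : Matrix FamIndex FamIndex F) :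
    DualE F x i * famPart x P = famPart x (famProj F i * P) := by
  rw [famPart_apply, mul_sandwich (DualE_mul_famMatrix x i), ← mul_kronecker_mul, Matrix.one_mul,
    famPart_apply]

theorem famPart_mul_DualE (x : XG G) (i : Fin 5) (P : Matrix FamIndex FamIndex F) :
    famPart x P * DualE F x i = famPart x (P * famProj F i) := by
  have hproj : (famProj F i ⊗ₖ (1 : Matrix G G F))ᵀ = famProj F i ⊗ₖ 1 := by
    simp [← kroneckerMap_transpose, famProj]
  rw [famPart_apply, sandwich_mul (transpose_DualE x i) hproj (DualE_mul_famMatrix x i),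
    ← mul_kronecker_mul, Matrix.one_mul, famPart_apply]

theorem DualE_mul_classPart (x : XG G) (i : Fin 5) (Q : Matrix (Fin 5) (Fin 5) F) :
    DualE F x i * classPart x Q = classPart x (classProj F i * Q) :=
  mul_sandwich (DualE_mul_classMatrix x i) Q

theorem classPart_mul_DualE (x : XG G) (i : Fin 5) (Q : Matrix (Fin 5) (Fin 5) F) :
    classPart x Q * DualE F x i = classPart x (Q * classProj F i) :=
  sandwich_mul (transpose_DualE x i) (diagonal_transpose _) (DualE_mul_classMatrix x i) Q

/-- The coefficients `(c, P, Q)` of the normal form of the elements of `T`. -/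
abbrev NormalCoeff (F : Type) : Type :=
  F × Matrix FamIndex FamIndex F × Matrix (Fin 5) (Fin 5) F

/-- The normal form `c • E₄* + famPart P + classPart Q` of the elements of `T`. -/
def normalForm (x : XG G) : NormalCoeff F →ₗ[F] Matrix (XG G) (XG G) F :=
  (LinearMap.toSpanSingleton F _ (DualE F x 4)).coprod ((famPart x).coprod (classPart x))

theorem normalForm_apply (x : XG G) (m : NormalCoeff F) :
    normalForm x m = m.1 • DualE F x 4 + (famPart x m.2.1 + classPart x m.2.2) := rfl

theorem normalForm_mul_normalForm (hG : ∀ a : G, a ^ 2 = 1) (hn : (Fintype.card G : F) ≠ 1)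
    (x : XG G) (m m' : NormalCoeff F) :
    normalForm x m * normalForm x m' = normalForm x
      (m.1 * m'.1,
        twistedMul (famProj F 4) (famGram (Fintype.card G : F)) m.1 m'.1 m.2.1 m'.2.1,
        twistedMul (classProj F 4) (diagonal (valency (Fintype.card G : F))) m.1 m'.1
          m.2.2 m'.2.2) := by
  simp only [normalForm_apply, twistedMul, mul_add, add_mul, smul_mul_assoc, mul_smul_comm,
    DualE_mul_self, DualE_mul_famPart, famPart_mul_DualE, DualE_mul_classPart, classPart_mul_DualE,
    famPart_mul_famPart hG hn, classPart_mul_classPart, famPart_mul_classPart hn,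
    classPart_mul_famPart hn, map_add, map_smul]
  module

end NormalForm

section Coordinates

variable {F G : Type} [Field F] [Group G] [DecidableEq G]

/-- The adjacency matrix of the relation of having the same `k`-th coordinate. -/
def coordAdj (F : Type) [Field F] {G : Type} [Group G] [DecidableEq G] (k : Fin 3) :
    Matrix (XG G) (XG G) F :=
  Matrix.of fun y z => if y.1 k = z.1 k then 1 else 0

/-- The combination of the families that represents the coordinate `k` away from the class on
which this coordinate is constant. -/
def coordVec (F : Type) [Field F] (k : Fin 3) : FamIndex → F :=
  Sum.elim (fun l => if l = k then 0 else 1) (fun l => if l = k then 1 else 0)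

/-- The indicator of the relation classes around a point on which the coordinate `k` is constant. -/
def constIndicator (F : Type) [Field F] (k : Fin 3) (i : Fin 5) : F :=
  if i = 0 ∨ i = lineClass k then 1 else 0

theorem constIndicator_classOf (x y : XG G) (k : Fin 3) :
    constIndicator F k (classOf x y) = 1 - nonOne F (displacement x y k) := by
  rw [← ite_eq_one_eq_one_sub_nonOne]
  by_cases h : x = y <;>
    simp [constIndicator, classOf_eq_zero, classOf_eq_lineClass, displacement_eq_one, h]

theorem Adj_zero : Adj F 0 = (1 : Matrix (XG G) (XG G) F) := by
  ext y z
  simp [Adj, rel, one_apply]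

theorem Adj_lineClass (k : Fin 3) :
    Adj F (lineClass k) = coordAdj F k - (1 : Matrix (XG G) (XG G) F) := by
  ext y z
  simp only [Adj, coordAdj, of_apply, rel_iff_classOf_eq, classOf_eq_lineClass, Matrix.sub_apply,
    one_apply]
  by_cases h : y = z <;> simp [h]

theorem sum_Adj : ∑ i, Adj F i = AllOne F G := by
  ext y z
  simp [Matrix.sum_apply, Adj, rel_iff_classOf_eq, AllOne]

theorem sum_DualE (x : XG G) : ∑ i, DualE F x i = 1 := by
  ext y z
  by_cases h : y = z <;> simp [Matrix.sum_apply, DualE_eq_diagonal, one_apply, h]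

theorem classPart_apply (x y z : XG G) (Q : Matrix (Fin 5) (Fin 5) F) :
    classPart x Q y z = Q (classOf x y) (classOf x z) := by
  simp [classPart, sandwich_apply, mul_apply, classMatrix]

theorem AllOne_eq_classPart (x : XG G) :
    AllOne F G = classPart x (Matrix.of fun _ _ => 1) := by
  ext y z
  rw [classPart_apply]
  rfl

theorem DualE_zero (x : XG G) : DualE F x 0 = classPart x (single 0 0 1) := by
  ext y z
  simp only [classPart_apply, DualE_eq_diagonal, diagonal_apply, single_apply, ← ite_and,
    eq_comm (a := (0 : Fin 5)), classOf_eq_zero]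
  refine if_congr ?_ rfl rfl
  grind

variable [Fintype G]

theorem DualE_lineClass (x : XG G) {k l : Fin 3} (hkl : k ≠ l) :
    DualE F x (lineClass k) =
      DualE F x (lineClass k) * coordAdj F l * DualE F x (lineClass k) := by
  ext y z
  simp only [DualE_eq_diagonal, mul_diagonal, diagonal_mul, diagonal_apply, coordAdj, of_apply,
    classOf_eq_lineClass]
  have hyz := @eq_of_coord_eq G _ y z k l hkl
  grind

theorem famPart_vecMulVec_apply (x y z : XG G) (u v : FamIndex → F) :
    famPart x (vecMulVec u v) y z =
      ∑ g, (∑ α, u α * famMatrix F x y (α, g)) * ∑ β, v β * famMatrix F x z (β, g) := by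
  have hleft (β : FamIndex) (g : G) :
      (famMatrix F x * (vecMulVec u v ⊗ₖ (1 : Matrix G G F))) y (β, g) =
        (∑ α, u α * famMatrix F x y (α, g)) * v β := by
    simp only [mul_apply, Fintype.sum_prod_type, kronecker_apply, vecMulVec_apply, one_apply,
      mul_ite, mul_one, mul_zero, Finset.sum_ite_eq', Finset.mem_univ, if_true, Finset.sum_mul]
    exact Finset.sum_congr rfl fun α _ => by ring
  rw [famPart_apply, sandwich_apply, mul_apply, Fintype.sum_prod_type, Finset.sum_comm]
  simp only [hleft, transpose_apply, Finset.mul_sum, mul_assoc]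

theorem sum_coordVec_mul_famMatrix (hG : ∀ a : G, a ^ 2 = 1) (x y : XG G) (k : Fin 3) (g : G) :
    ∑ α, coordVec F k α * famMatrix F x y (α, g) = sumZeroProj F G (displacement x y k) g := by
  have hone {l : Fin 3} (hl : classOf x y = lineClass l) : displacement x y l = 1 :=
    displacement_eq_one.2 (classOf_eq_lineClass.1 hl).2
  have hsucc (l : Fin 3) : l + 1 ≠ l := by
    decide +revert
  have hline (l : Fin 3) : coordVec F k (Sum.inl l) * famMatrix F x y (Sum.inl l, g) =
      if classOf x y = lineClass l then sumZeroProj F G (displacement x y k) g else 0 := by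
    by_cases hl : classOf x y = lineClass l
    · by_cases hlk : l = k
      · simp [coordVec, ← hlk, hone hl, sumZeroProj_one_left]
      · simp [coordVec, famMatrix, famClass, famCoord, hl, hlk,
          displacement_eq_of_displacement_eq_one hG (hone hl) (hsucc l) (Ne.symm hlk)]
    · simp [famMatrix, famClass, hl]
  have hfour : ∑ l, coordVec F k (Sum.inr l) * famMatrix F x y (Sum.inr l, g) =
      if classOf x y = 4 then sumZeroProj F G (displacement x y k) g else 0 := by
    rw [Finset.sum_eq_single k (fun l _ hl => by simp [coordVec, hl]) (by simp), coordVec,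
      Sum.elim_inr, if_pos rfl, one_mul]
    rfl
  have hzero (h : classOf x y = 0) : sumZeroProj F G (displacement x y k) g = 0 := by
    rw [← classOf_eq_zero.1 h, displacement_self, sumZeroProj_one_left]
  rw [Fintype.sum_sum_type, hfour]
  simp only [hline, Fin.sum_univ_three]
  generalize classOf x y = c at *
  fin_cases c <;> simp_all [lineClass]

theorem coordAdj_eq (hG : ∀ a : G, a ^ 2 = 1) (hn : (Fintype.card G : F) ≠ 1) (x : XG G)
    (k : Fin 3) :
    coordAdj F k = famPart x (vecMulVec (coordVec F k) (coordVec F k)) +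
      classPart x (vecMulVec (constIndicator F k) (constIndicator F k) +
        ((Fintype.card G : F) - 1)⁻¹ •
          vecMulVec (1 - constIndicator F k) (1 - constIndicator F k)) := by
  have hsum (a b : G) :
      ∑ g, sumZeroProj F G a g * sumZeroProj F G b g = sumZeroProj F G a b := by
    have hmul : sumZeroProj F G * (sumZeroProj F G)ᵀ = sumZeroProj F G := by
      rw [transpose_sumZeroProj, sumZeroProj_mul_self hn]
    simpa only [mul_apply, transpose_apply] using congrFun₂ hmul a b
  ext y z
  rw [Matrix.add_apply, famPart_vecMulVec_apply, classPart_apply]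
  simp only [sum_coordVec_mul_famMatrix hG, hsum, Matrix.add_apply, Matrix.smul_apply,
    vecMulVec_apply, Pi.sub_apply, Pi.one_apply, constIndicator_classOf, sub_sub_cancel,
    smul_eq_mul]
  rw [← ite_eq_eq_sumZeroProj_add]
  simp only [coordAdj, of_apply, displacement_inj]

end Coordinates

section Generation

variable {F G : Type} [Field F] [Group G] [DecidableEq G] [Fintype G]

theorem mul_mem_range_normalForm (hG : ∀ a : G, a ^ 2 = 1) (hn : (Fintype.card G : F) ≠ 1)
    (x : XG G) {M N : Matrix (XG G) (XG G) F} (hM : M ∈ LinearMap.range (normalForm x))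
    (hN : N ∈ LinearMap.range (normalForm x)) : M * N ∈ LinearMap.range (normalForm x) := by
  obtain ⟨m, rfl⟩ := hM
  obtain ⟨m', rfl⟩ := hN
  exact ⟨_, (normalForm_mul_normalForm hG hn x m m').symm⟩

theorem famPart_mem_range_normalForm (x : XG G) (P : Matrix FamIndex FamIndex F) :
    famPart x P ∈ LinearMap.range (normalForm x) :=
  ⟨(0, P, 0), by simp [normalForm_apply]⟩

theorem classPart_mem_range_normalForm (x : XG G) (Q : Matrix (Fin 5) (Fin 5) F) :
    classPart x Q ∈ LinearMap.range (normalForm x) :=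
  ⟨(0, 0, Q), by simp [normalForm_apply]⟩

theorem coordAdj_mem_range_normalForm (hG : ∀ a : G, a ^ 2 = 1)
    (hn : (Fintype.card G : F) ≠ 1) (x : XG G) (k : Fin 3) :
    coordAdj F k ∈ LinearMap.range (normalForm x) := by
  rw [coordAdj_eq hG hn x k]
  exact add_mem (famPart_mem_range_normalForm x _) (classPart_mem_range_normalForm x _)

theorem DualE_mem_range_normalForm (hG : ∀ a : G, a ^ 2 = 1) (hn : (Fintype.card G : F) ≠ 1)
    (x : XG G) (i : Fin 5) : DualE F x i ∈ LinearMap.range (normalForm x) := by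
  have hline (k : Fin 3) : DualE F x (lineClass k) ∈ LinearMap.range (normalForm x) := by
    obtain ⟨l, hl⟩ := exists_ne k
    rw [DualE_lineClass x hl.symm, coordAdj_eq hG hn x l, mul_add, add_mul, DualE_mul_famPart,
      famPart_mul_DualE, DualE_mul_classPart, classPart_mul_DualE]
    exact add_mem (famPart_mem_range_normalForm x _) (classPart_mem_range_normalForm x _)
  fin_cases i
  · exact DualE_zero (F := F) x ▸ classPart_mem_range_normalForm x _
  · exact hline 0
  · exact hline 1
  · exact hline 2
  · exact ⟨(1, 0, 0), by simp [normalForm_apply]⟩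

theorem one_mem_range_normalForm (hG : ∀ a : G, a ^ 2 = 1) (hn : (Fintype.card G : F) ≠ 1)
    (x : XG G) : (1 : Matrix (XG G) (XG G) F) ∈ LinearMap.range (normalForm x) :=
  sum_DualE (F := F) x ▸ sum_mem fun i _ => DualE_mem_range_normalForm hG hn x i

theorem Adj_mem_range_normalForm (hG : ∀ a : G, a ^ 2 = 1) (hn : (Fintype.card G : F) ≠ 1)
    (x : XG G) (i : Fin 5) : Adj F i ∈ LinearMap.range (normalForm x) := by
  have hzero : Adj F 0 ∈ LinearMap.range (normalForm x) := by
    rw [Adj_zero]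
    exact one_mem_range_normalForm hG hn x
  have hline (k : Fin 3) : Adj F (lineClass k) ∈ LinearMap.range (normalForm x) := by
    rw [Adj_lineClass]
    exact sub_mem (coordAdj_mem_range_normalForm hG hn x k) (one_mem_range_normalForm hG hn x)
  have hall : ∑ i, Adj F i ∈ LinearMap.range (normalForm (F := F) x) := by
    rw [sum_Adj, AllOne_eq_classPart x]
    exact classPart_mem_range_normalForm x _
  rw [Fin.sum_univ_five] at hall
  fin_cases i
  · exact hzero
  · exact hline 0
  · exact hline 1
  · exact hline 2
  · exact (add_mem_cancel_left
      (add_mem (add_mem (add_mem hzero (hline 0)) (hline 1)) (hline 2))).1 hall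

theorem toSubmodule_TerwilligerAlg_le (hG : ∀ a : G, a ^ 2 = 1)
    (hn : (Fintype.card G : F) ≠ 1) (x : XG G) :
    Subalgebra.toSubmodule (TerwilligerAlg F G x) ≤ LinearMap.range (normalForm x) := by
  refine Algebra.adjoin_le (S := (LinearMap.range (normalForm (F := F) x)).toSubalgebra
    (one_mem_range_normalForm hG hn x) fun _ _ => mul_mem_range_normalForm hG hn x) ?_
  rintro _ ⟨a, b, c, rfl⟩
  exact mul_mem_range_normalForm hG hn x
    (mul_mem_range_normalForm hG hn x (DualE_mem_range_normalForm hG hn x a)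
      (Adj_mem_range_normalForm hG hn x b)) (DualE_mem_range_normalForm hG hn x c)

theorem DualE_mem_TerwilligerAlg (x : XG G) (i : Fin 5) :
    DualE F x i ∈ TerwilligerAlg F G x :=
  Algebra.subset_adjoin ⟨i, 0, i, by rw [Adj_zero, mul_one, DualE_mul_self]⟩

theorem Adj_mem_TerwilligerAlg (x : XG G) (i : Fin 5) : Adj F i ∈ TerwilligerAlg F G x := by
  have hsum : ∑ a, ∑ c, DualE F x a * Adj F i * DualE F x c = Adj F i := by
    simp only [← Finset.mul_sum, ← Finset.sum_mul, sum_DualE, one_mul, mul_one]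
  rw [← hsum]
  exact sum_mem fun a _ => sum_mem fun c _ => Algebra.subset_adjoin ⟨a, i, c, rfl⟩

theorem coordAdj_mem_TerwilligerAlg (x : XG G) (k : Fin 3) :
    coordAdj F k ∈ TerwilligerAlg F G x := by
  rw [← sub_add_cancel (coordAdj F k) 1, ← Adj_lineClass]
  exact add_mem (Adj_mem_TerwilligerAlg x _) (one_mem _)

theorem classPart_mem_TerwilligerAlg (x : XG G) (Q : Matrix (Fin 5) (Fin 5) F) :
    classPart x Q ∈ TerwilligerAlg F G x := by
  have hone : classPart x (Matrix.of fun _ _ => 1) ∈ TerwilligerAlg F G x := by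
    rw [← AllOne_eq_classPart, ← sum_Adj]
    exact sum_mem fun i _ => Adj_mem_TerwilligerAlg x i
  have hsingle (i j : Fin 5) :
      classProj F i * (Matrix.of fun _ _ => 1) * classProj F j = single i j 1 := by
    ext a b
    simp [classProj, single_apply, ← ite_and, eq_comm, and_comm]
  refine map_mem_of_map_single_mem _ (Subalgebra.toSubmodule (TerwilligerAlg F G x))
    (fun i j => ?_) Q
  rw [Subalgebra.mem_toSubmodule, ← hsingle, ← classPart_mul_DualE, ← DualE_mul_classPart]
  exact mul_mem (mul_mem (DualE_mem_TerwilligerAlg x i) hone) (DualE_mem_TerwilligerAlg x j)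

theorem famProj_mulVec_coordVec {α : FamIndex} {k : Fin 3} (hα : coordVec F k α = 1) :
    famProj F (famClass α) *ᵥ coordVec F k = Pi.single α 1 := by
  ext β
  rw [famProj, mulVec_diagonal]
  rcases α with i | i
  · have hik : i ≠ k := by
      rintro rfl
      simp [coordVec] at hα
    rcases β with j | j
    · rcases eq_or_ne j i with rfl | hji
      · simp [coordVec, famClass, hik]
      · simp [famClass, lineClass_inj, hji]
    · simp [famClass, (lineClass_ne_four _).symm]
  · have hik : i = k := by
      by_contra hik
      simp [coordVec, hik] at hα
    rcases β with j | j
    · simp [famClass, lineClass_ne_four]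
    · simp [coordVec, famClass, Pi.single_apply, hik]

theorem famPart_single_mem_TerwilligerAlg_of_coordVec_eq_one (hG : ∀ a : G, a ^ 2 = 1)
    (hn : (Fintype.card G : F) ≠ 1) (x : XG G) {α β : FamIndex} {k : Fin 3}
    (hα : coordVec F k α = 1) (hβ : coordVec F k β = 1) :
    famPart x (single α β 1) ∈ TerwilligerAlg F G x := by
  have hvec : famProj F (famClass α) * vecMulVec (coordVec F k) (coordVec F k) *
      famProj F (famClass β) = single α β 1 := by
    rw [mul_vecMulVec, vecMulVec_mul, famProj_mulVec_coordVec hα, ← mulVec_transpose,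
      show (famProj F (famClass β))ᵀ = famProj F (famClass β) from diagonal_transpose _,
      famProj_mulVec_coordVec hβ, single_eq_single_vecMulVec_single]
  have hmem := mul_mem (mul_mem (DualE_mem_TerwilligerAlg x (famClass α))
    (coordAdj_mem_TerwilligerAlg x k)) (DualE_mem_TerwilligerAlg (F := F) x (famClass β))
  rw [coordAdj_eq hG hn x k, mul_add, add_mul, DualE_mul_famPart, famPart_mul_DualE,
    DualE_mul_classPart, classPart_mul_DualE, hvec] at hmem
  exact (add_mem_cancel_right (classPart_mem_TerwilligerAlg x _)).1 hmem

theorem famPart_mem_TerwilligerAlg (hG : ∀ a : G, a ^ 2 = 1)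
    (hn : (Fintype.card G : F) ≠ 1) (x : XG G) (P : Matrix FamIndex FamIndex F) :
    famPart x P ∈ TerwilligerAlg F G x := by
  have hsingle (α β : FamIndex) : famPart x (single α β 1) ∈ TerwilligerAlg F G x := by
    have hcoord (α : FamIndex) : ∃ k, coordVec F k α = 1 := by
      rcases α with i | i
      · exact (exists_ne i).imp fun k hk => if_neg hk.symm
      · exact ⟨i, if_pos rfl⟩
    obtain ⟨k, hk⟩ := hcoord α
    obtain ⟨l, hl⟩ := hcoord β
    -- On `Rᵢ₊₁` with `i ≠ k, l` the coordinates `k` and `l` see the same family, which links `α`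
    -- and `β`.
    obtain ⟨i, hik, hil⟩ : ∃ i, i ≠ k ∧ i ≠ l := by
      clear hk hl
      decide +revert
    have hone {k : Fin 3} (hik : i ≠ k) : coordVec F k (Sum.inl i) = 1 := if_neg hik
    have hmul := mul_mem
      (famPart_single_mem_TerwilligerAlg_of_coordVec_eq_one hG hn x hk (hone hik))
      (famPart_single_mem_TerwilligerAlg_of_coordVec_eq_one hG hn x (hone hil) hl)
    rw [famPart_mul_famPart hG hn] at hmul
    simpa [single_mul_mul_single, famGram] using hmul
  exact map_mem_of_map_single_mem _ (Subalgebra.toSubmodule (TerwilligerAlg F G x)) hsingle P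

theorem range_normalForm (hG : ∀ a : G, a ^ 2 = 1) (hn : (Fintype.card G : F) ≠ 1) (x : XG G) :
    LinearMap.range (normalForm x) = Subalgebra.toSubmodule (TerwilligerAlg F G x) := by
  refine le_antisymm ?_ (toSubmodule_TerwilligerAlg_le hG hn x)
  rintro _ ⟨m, rfl⟩
  exact add_mem (Subalgebra.smul_mem _ (DualE_mem_TerwilligerAlg x 4) _)
    (add_mem (famPart_mem_TerwilligerAlg hG hn x _) (classPart_mem_TerwilligerAlg x _))

end Generation

section Kernel

variable {F G : Type} [Field F] [Group G] [Fintype G]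

theorem exists_injective_forall_perm_exists_displacement_eq (hG : ∀ a : G, a ^ 2 = 1)
    (hcard : 3 ≤ Fintype.card G) (x : XG G) :
    ∃ t : Fin 3 → G, Function.Injective t ∧ (∀ k, t k ≠ 1) ∧
      ∀ σ : Equiv.Perm (Fin 3), ∃ y, ∀ k, displacement x y k = t (σ k) := by
  obtain ⟨a, b, ha, hb, hab⟩ := exists_ne_one_ne_one_ne hcard
  have hself (c : G) : c * c = 1 := by rw [← sq, hG]
  have hcomm : b * a = a * b := (commute_of_forall_sq_eq_one hG b a).eq
  have hne : a * b ≠ 1 := fun h => hab (eq_of_mul_eq_one_of_forall_sq_eq_one hG h)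
  let t : Fin 3 → G := ![a, b, a * b]
  have htriple {i j k : Fin 3} (hij : i ≠ j) (hik : i ≠ k) (hjk : j ≠ k) : t i * t j = t k := by
    have haab : a * (a * b) = b := by rw [← mul_assoc, hself, one_mul]
    have haba : a * b * a = b := by rw [← hcomm, mul_assoc, hself, mul_one]
    have habb : a * b * b = a := by rw [mul_assoc, hself, mul_one]
    have hbab : b * (a * b) = a := by rw [← mul_assoc, hcomm, habb]
    fin_cases i <;> fin_cases j <;> fin_cases k <;>
      simp [t, hcomm, haab, haba, habb, hbab] at hij hik hjk ⊢
  refine ⟨t, ?_, ?_, fun σ => ?_⟩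
  · intro i j
    fin_cases i <;> fin_cases j <;> simp [t, ha, hb, hab, hab.symm]
  · intro k
    fin_cases k <;> simp [t, ha, hb, hne]
  · obtain ⟨y, hy⟩ := (displacement_pair_bijective x (zero_ne_one (α := Fin 3))).2
      (t (σ 0), t (σ 1))
    have h0 : displacement x y 0 = t (σ 0) := congrArg Prod.fst hy
    have h1 : displacement x y 1 = t (σ 1) := congrArg Prod.snd hy
    have h2 : displacement x y 2 = t (σ 2) := by
      rw [← displacement_zero_mul_displacement_one hG, h0, h1]
      exact htriple (by simp) (by simp) (by simp)
    exact ⟨y, by simp [Fin.forall_fin_succ, h0, h1, h2]⟩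

variable [DecidableEq G]

theorem exists_ne_zero_DualE_four_mulVec_eq (hG : ∀ a : G, a ^ 2 = 1)
    (hcard : 3 ≤ Fintype.card G) (x : XG G) :
    ∃ s : XG G → F, s ≠ 0 ∧ DualE F x 4 *ᵥ s = s ∧
      (famMatrix F x)ᵀ *ᵥ s = 0 ∧ (classMatrix F x)ᵀ *ᵥ s = 0 := by
  -- `s` is the alternating sum over the points whose displacements permute a triple `a, b, ab`: a
  -- function of a single coordinate cannot tell the even permutations from the odd ones.
  obtain ⟨t, ht, ht_ne, hex⟩ := exists_injective_forall_perm_exists_displacement_eq hG hcard x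
  choose y hy using hex
  have hclass (σ : Equiv.Perm (Fin 3)) : classOf x (y σ) = 4 :=
    classOf_eq_four.2 fun k hk => ht_ne (σ k) ((hy σ k).symm.trans (displacement_eq_one.2 hk))
  have hy_inj : Function.Injective y := fun σ τ h =>
    Equiv.ext fun k => ht (by rw [← hy σ, ← hy τ, h])
  have hcol {m : Type} (M : Matrix m (XG G) F) (i : m) :
      (M *ᵥ ∑ σ, Pi.single (y σ) ((Equiv.Perm.sign σ : ℤ) : F)) i =
        ∑ σ, ((Equiv.Perm.sign σ : ℤ) : F) * M i (y σ) := by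
    simp [mulVec_sum, mul_comm]
  have hsum (f : Fin 3 → F) (k : Fin 3) :
      ∑ σ : Equiv.Perm (Fin 3), ((Equiv.Perm.sign σ : ℤ) : F) * f (σ k) = 0 :=
    sum_perm_sign_mul_apply (l := k + 1) (m := k + 2) (by decide +revert) (by decide +revert)
      (by decide +revert) f
  refine ⟨∑ σ, Pi.single (y σ) ((Equiv.Perm.sign σ : ℤ) : F), fun h => ?_, ?_, ?_, ?_⟩
  · have happly := congrFun h (y 1)
    simp [Finset.sum_apply, Pi.single_apply, hy_inj.eq_iff] at happly
  · rw [mulVec_sum]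
    refine Finset.sum_congr rfl fun σ _ => ?_
    rw [DualE_eq_diagonal, diagonal_mulVec_single, if_pos (hclass σ), one_mul]
  · ext ⟨α, g⟩
    rw [hcol]
    by_cases hα : famClass α = 4
    · simpa [famMatrix, hclass, hα, hy] using hsum (fun k => sumZeroProj F G (t k) g) (famCoord α)
    · simp [famMatrix, hclass, Ne.symm hα]
  · ext i
    rw [hcol]
    simpa [classMatrix, hclass] using hsum (fun _ => if 4 = i then 1 else 0) 0

theorem fst_eq_zero_of_normalForm_eq_zero (hG : ∀ a : G, a ^ 2 = 1)
    (hcard : 3 ≤ Fintype.card G) {x : XG G} {m : NormalCoeff F}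
    (hm : normalForm x m = 0) : m.1 = 0 := by
  obtain ⟨s, hs, hdual, hfam, hclass⟩ := exists_ne_zero_DualE_four_mulVec_eq (F := F) hG hcard x
  have hsmul : normalForm x m *ᵥ s = m.1 • s := by
    simp only [normalForm_apply, famPart_apply, classPart, sandwich_apply, add_mulVec, smul_mulVec,
      ← mulVec_mulVec, hdual, hfam, hclass, mulVec_zero, add_zero]
  rw [hm, zero_mulVec, eq_comm, smul_eq_zero] at hsmul
  exact hsmul.resolve_right hs

theorem famGram_mul_mul_famGram_eq_zero (hG : ∀ a : G, a ^ 2 = 1) (hcard : 3 ≤ Fintype.card G)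
    (hn : (Fintype.card G : F) ≠ 1) {x : XG G} {m : NormalCoeff F}
    (hm : normalForm x m = 0) :
    famGram (Fintype.card G : F) * m.2.1 * famGram (Fintype.card G : F) = 0 := by
  have hkron : (famGram (Fintype.card G : F) * m.2.1 * famGram (Fintype.card G : F)) ⊗ₖ
      sumZeroProj F G = (famMatrix F x)ᵀ * normalForm x m * famMatrix F x := by
    rw [normalForm_apply, fst_eq_zero_of_normalForm_eq_zero hG hcard hm, zero_smul, zero_add]
    have hDL : (classMatrix F x)ᵀ * famMatrix F x = 0 := by
      simpa using congrArg transpose (transpose_famMatrix_mul_classMatrix hn x)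
    calc
      _ = (famMatrix F x)ᵀ * famMatrix F x * (m.2.1 ⊗ₖ 1) *
            ((famMatrix F x)ᵀ * famMatrix F x) := by
        rw [transpose_famMatrix_mul_famMatrix hG hn, ← mul_kronecker_mul, ← mul_kronecker_mul,
          Matrix.mul_one, sumZeroProj_mul_self hn]
      _ = _ := by
        simp only [famPart_apply, classPart, sandwich_apply, Matrix.mul_add, Matrix.add_mul,
          Matrix.mul_assoc, hDL, Matrix.mul_zero, add_zero]
  rw [hm, Matrix.mul_zero, Matrix.zero_mul] at hkron
  obtain ⟨g, h, hgh⟩ : ∃ g h, sumZeroProj F G g h ≠ 0 := by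
    simpa [← Matrix.ext_iff] using sumZeroProj_ne_zero hn hcard
  ext α β
  exact (mul_eq_zero.1 (congrFun₂ hkron (α, g) (β, h))).resolve_right hgh

theorem diagonal_valency_mul_mul_diagonal_valency_eq_zero (hG : ∀ a : G, a ^ 2 = 1)
    (hcard : 3 ≤ Fintype.card G) (hn : (Fintype.card G : F) ≠ 1) {x : XG G} {m : NormalCoeff F}
    (hm : normalForm x m = 0) :
    diagonal (valency (Fintype.card G : F)) * m.2.2 *
      diagonal (valency (Fintype.card G : F)) = 0 := by
  have hLD := transpose_famMatrix_mul_classMatrix hn x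
  calc
    _ = (classMatrix F x)ᵀ * normalForm x m * classMatrix F x := by
      rw [normalForm_apply, fst_eq_zero_of_normalForm_eq_zero hG hcard hm, zero_smul, zero_add,
        ← transpose_classMatrix_mul_classMatrix x]
      simp only [famPart_apply, classPart, sandwich_apply, Matrix.mul_add, Matrix.add_mul,
        Matrix.mul_assoc, hLD, Matrix.mul_zero, zero_add]
    _ = 0 := by rw [hm, Matrix.mul_zero, Matrix.zero_mul]

end Kernel

section CardEqFour

variable {F : Type} [Field F]

/-- For `q = 4` the radical of `famGram q` is spanned by the sum of the three families on `R₄`;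
this is the coordinate map onto the quotient by that radical. -/
def famQuot (F : Type) [Field F] : Matrix (Fin 3 ⊕ Fin 2) FamIndex F :=
  fromBlocks 1 0 0 !![1, 0, -1; 0, 1, -1]

/-- The right inverse of `famQuot` which is given by the first two families on `R₄`. -/
def famQuotSection (F : Type) [Field F] : Matrix FamIndex (Fin 3 ⊕ Fin 2) F :=
  fromBlocks 1 0 0 !![1, 0; 0, 1; 0, 0]

/-- The nondegenerate form that `famGram 4` induces on the quotient by its radical. -/
def famQuotGram (F : Type) [Field F] : Matrix (Fin 3 ⊕ Fin 2) (Fin 3 ⊕ Fin 2) F :=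
  fromBlocks 1 0 0 !![2, -1; -1, 2]

/-- The endomorphism that `famProj 4` induces on the quotient by the radical of `famGram 4`. -/
def famQuotProj (F : Type) [Field F] : Matrix (Fin 3 ⊕ Fin 2) (Fin 3 ⊕ Fin 2) F :=
  fromBlocks 0 0 0 1

theorem famQuot_mul_famQuotSection : famQuot F * famQuotSection F = 1 := by
  rw [famQuot, famQuotSection, fromBlocks_multiply, ← fromBlocks_one]
  simp [one_fin_two]

theorem famGram_four : famGram (4 : F) = (famQuot F)ᵀ * famQuotGram F * famQuot F := by
  have hblock : Matrix.of (fun i j : Fin 3 => (if i = j then (4 : F) - 1 else 0) - 1) =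
      (!![1, 0, -1; 0, 1, -1] : Matrix (Fin 2) (Fin 3) F)ᵀ *
        (!![2, -1; -1, 2] : Matrix (Fin 2) (Fin 2) F) *
        (!![1, 0, -1; 0, 1, -1] : Matrix (Fin 2) (Fin 3) F) := by
    ext i j
    fin_cases i <;> fin_cases j <;> norm_num [mul_apply, Fin.sum_univ_two]
  rw [famGram, famQuot, famQuotGram, fromBlocks_transpose, fromBlocks_multiply,
    fromBlocks_multiply]
  simp [hblock]

theorem famQuotProj_mul_self : famQuotProj F * famQuotProj F = famQuotProj F := by
  simp [famQuotProj, fromBlocks_multiply]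

theorem famQuotProj_mul_famQuotGram :
    famQuotProj F * famQuotGram F = famQuotGram F * famQuotProj F := by
  simp [famQuotProj, famQuotGram, fromBlocks_multiply]

theorem famQuotProj_mul_famQuot : famQuotProj F * famQuot F = famQuot F * famProj F 4 := by
  have hproj : famProj F 4 = fromBlocks 0 0 0 1 := by
    ext (i | i) (j | j) <;> simp [famProj, famClass, diagonal_apply, lineClass_ne_four, one_apply]
  rw [hproj, famQuotProj, famQuot, fromBlocks_multiply, fromBlocks_multiply]
  simp

theorem four_ne_one_of_three_ne_zero (h3 : (3 : F) ≠ 0) : (4 : F) ≠ 1 := fun h =>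
  h3 (by linear_combination h)

theorem isUnit_famQuotGram (h3 : (3 : F) ≠ 0) : IsUnit (famQuotGram F) := by
  rw [isUnit_iff_isUnit_det, famQuotGram, det_fromBlocks_zero₂₁, det_one, one_mul, det_fin_two_of,
    isUnit_iff_ne_zero]
  convert h3 using 1
  ring

theorem famGram_four_mul_mul_famGram_four_eq_zero (h3 : (3 : F) ≠ 0)
    {P : Matrix FamIndex FamIndex F} :
    famGram 4 * P * famGram 4 = 0 ↔ sandwich (famQuot F) P = 0 := by
  have hfactor : famGram 4 * P * famGram 4 =
      (famQuot F)ᵀ * (famQuotGram F * sandwich (famQuot F) P * famQuotGram F) * famQuot F := by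
    simp only [famGram_four, sandwich_apply, Matrix.mul_assoc]
  have hsection : (famQuotSection F)ᵀ * (famQuot F)ᵀ = 1 := by
    rw [← transpose_mul, famQuot_mul_famQuotSection, transpose_one]
  refine ⟨fun h => ?_, fun h => by rw [hfactor, h]; simp⟩
  have hquot : famQuotGram F * sandwich (famQuot F) P * famQuotGram F = 0 := by
    calc
      _ = (famQuotSection F)ᵀ * (famQuot F)ᵀ *
            (famQuotGram F * sandwich (famQuot F) P * famQuotGram F) *
            (famQuot F * famQuotSection F) := by
        rw [hsection, famQuot_mul_famQuotSection, Matrix.one_mul, Matrix.mul_one]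
      _ = (famQuotSection F)ᵀ * (famGram 4 * P * famGram 4) * famQuotSection F := by
        simp only [hfactor, Matrix.mul_assoc]
      _ = 0 := by rw [h, Matrix.mul_zero, Matrix.zero_mul]
  exact (isUnit_famQuotGram h3).mul_right_eq_zero.1
    ((isUnit_famQuotGram h3).mul_left_eq_zero.1 hquot)

theorem isUnit_diagonal_valency_four (h2 : (2 : F) ≠ 0) (h3 : (3 : F) ≠ 0) :
    IsUnit (diagonal (valency (4 : F))) := by
  have hthree : (4 : F) - 1 ≠ 0 := by
    convert h3 using 1
    ring
  have htwo : (4 : F) - 2 ≠ 0 := by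
    convert h2 using 1
    ring
  rw [isUnit_diagonal, Pi.isUnit_iff]
  simp [Fin.forall_fin_succ, valency, hthree, htwo]

theorem sandwich_famQuot_twistedMul (c c' : F) (P P' : Matrix FamIndex FamIndex F) :
    sandwich (famQuot F) (twistedMul (famProj F 4) (famGram 4) c c' P P') =
      twistedMul (famQuotProj F) (famQuotGram F) c c' (sandwich (famQuot F) P)
        (sandwich (famQuot F) P') := by
  have hproj : (famQuotProj F)ᵀ = famQuotProj F := by
    simp [famQuotProj, fromBlocks_transpose]
  rw [twistedMul, twistedMul, mul_sandwich famQuotProj_mul_famQuot,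
    sandwich_mul hproj (show (famProj F 4)ᵀ = famProj F 4 from diagonal_transpose _)
      famQuotProj_mul_famQuot, map_add, map_add, map_smul, map_smul]
  simp only [sandwich_apply, famGram_four, Matrix.mul_assoc]

/-- The homomorphism onto `M₅(F) × M₅(F) × F` for `|G| = 4` in `F`, in terms of coefficients: the
class part, the family part modulo the radical of its Gram matrix, and the coefficient of `E₄*`. -/
def blockMap (F : Type) [Field F] :
    NormalCoeff F →ₗ[F]
      Matrix (Fin 5) (Fin 5) F × Matrix (Fin 5) (Fin 5) F × F :=
  (smulAddMul (classProj F 4) (diagonal (valency 4)) ∘ₗ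
    LinearMap.id.prodMap (LinearMap.snd ..)).prod
    (((reindexAlgEquiv F F finSumFinEquiv).toLinearMap ∘ₗ
      smulAddMul (famQuotProj F) (famQuotGram F) ∘ₗ
        LinearMap.id.prodMap (sandwich (famQuot F) ∘ₗ LinearMap.fst ..)).prod (LinearMap.fst ..))

theorem blockMap_apply (m : NormalCoeff F) :
    blockMap F m =
      (smulAddMul (classProj F 4) (diagonal (valency 4)) (m.1, m.2.2),
        reindexAlgEquiv F F finSumFinEquiv
          (smulAddMul (famQuotProj F) (famQuotGram F) (m.1, sandwich (famQuot F) m.2.1)),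
        m.1) := rfl

theorem blockMap_mul_blockMap (m m' : NormalCoeff F) :
    blockMap F m * blockMap F m' = blockMap F
      (m.1 * m'.1,
        twistedMul (famProj F 4) (famGram 4) m.1 m'.1 m.2.1 m'.2.1,
        twistedMul (classProj F 4) (diagonal (valency 4)) m.1 m'.1 m.2.2 m'.2.2) := by
  have hclass : classProj F 4 * classProj F 4 = classProj F 4 := by
    simp [classProj]
  have hcomm : classProj F 4 * diagonal (valency 4) = diagonal (valency 4) * classProj F 4 :=
    commute_diagonal _ _
  simp only [blockMap_apply, Prod.mk_mul_mk, ← map_mul, sandwich_famQuot_twistedMul,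
    smulAddMul_mul_smulAddMul hclass hcomm,
    smulAddMul_mul_smulAddMul (famQuotProj_mul_self (F := F)) famQuotProj_mul_famQuotGram]

theorem sandwich_famQuot_surjective : Function.Surjective (sandwich (famQuot F)) := fun P =>
  ⟨sandwich (famQuotSection F) P, by
    rw [sandwich_sandwich, famQuot_mul_famQuotSection, sandwich_apply, transpose_one,
      Matrix.one_mul, Matrix.mul_one]⟩

theorem blockMap_surjective (h2 : (2 : F) ≠ 0) (h3 : (3 : F) ≠ 0) :
    Function.Surjective (blockMap F) := by
  rintro ⟨A, B, c⟩
  obtain ⟨B', rfl⟩ := (reindexAlgEquiv F F (finSumFinEquiv (m := 3) (n := 2))).surjective B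
  obtain ⟨Q, rfl⟩ := smulAddMul_right_surjective (e := classProj F 4)
    (isUnit_diagonal_valency_four h2 h3) c A
  obtain ⟨P, rfl⟩ := smulAddMul_right_surjective (e := famQuotProj F) (isUnit_famQuotGram h3) c B'
  obtain ⟨P', rfl⟩ := sandwich_famQuot_surjective P
  exact ⟨(c, P', Q), blockMap_apply _⟩

theorem blockMap_eq_zero (h2 : (2 : F) ≠ 0) (h3 : (3 : F) ≠ 0) {m : NormalCoeff F} :
    blockMap F m = 0 ↔ m.1 = 0 ∧ sandwich (famQuot F) m.2.1 = 0 ∧ m.2.2 = 0 := by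
  rw [blockMap_apply, Prod.mk_eq_zero, Prod.mk_eq_zero, smulAddMul_apply, smulAddMul_apply,
    EmbeddingLike.map_eq_zero_iff]
  constructor
  · rintro ⟨hQ, hP, hc⟩
    rw [hc, zero_smul, zero_add] at hP hQ
    exact ⟨hc, (isUnit_famQuotGram h3).mul_left_eq_zero.1 hP,
      (isUnit_diagonal_valency_four h2 h3).mul_left_eq_zero.1 hQ⟩
  · rintro ⟨hc, hP, hQ⟩
    simp [hc, hP, hQ]

variable {G : Type} [Group G] [DecidableEq G] [Fintype G]

theorem ker_normalForm_le_ker_blockMap (h2 : (2 : F) ≠ 0) (h3 : (3 : F) ≠ 0)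
    (hG : ∀ a : G, a ^ 2 = 1) (hcard : 3 ≤ Fintype.card G) (hn : (Fintype.card G : F) = 4)
    (x : XG G) : LinearMap.ker (normalForm x) ≤ LinearMap.ker (blockMap F) := by
  intro m hm
  have hn1 := hn.trans_ne (four_ne_one_of_three_ne_zero h3)
  have hfam := famGram_mul_mul_famGram_eq_zero hG hcard hn1 hm
  have hclass := diagonal_valency_mul_mul_diagonal_valency_eq_zero hG hcard hn1 hm
  rw [hn] at hfam hclass
  exact (blockMap_eq_zero h2 h3).2 ⟨fst_eq_zero_of_normalForm_eq_zero hG hcard hm,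
    (famGram_four_mul_mul_famGram_four_eq_zero h3).1 hfam,
    (isUnit_diagonal_valency_four h2 h3).mul_right_eq_zero.1
      ((isUnit_diagonal_valency_four h2 h3).mul_left_eq_zero.1 hclass)⟩

theorem normalForm_mul_mul_eq_zero (h2 : (2 : F) ≠ 0) (h3 : (3 : F) ≠ 0)
    (hG : ∀ a : G, a ^ 2 = 1) (hn : (Fintype.card G : F) = 4) (x : XG G)
    {m : Fin 3 → NormalCoeff F} (hm : ∀ j, blockMap F (m j) = 0) :
    normalForm x (m 0) * normalForm x (m 1) * normalForm x (m 2) = 0 := by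
  have hfam (j : Fin 3) : normalForm x (m j) = famPart x (m j).2.1 := by
    obtain ⟨hc, -, hQ⟩ := (blockMap_eq_zero h2 h3).1 (hm j)
    rw [normalForm_apply, hc, hQ, zero_smul, map_zero, zero_add, add_zero]
  have hmid : famGram (4 : F) * (m 1).2.1 * famGram 4 = 0 :=
    (famGram_four_mul_mul_famGram_four_eq_zero h3).2 ((blockMap_eq_zero h2 h3).1 (hm 1)).2.1
  have hn1 := hn.trans_ne (four_ne_one_of_three_ne_zero h3)
  calc
    _ = famPart x ((m 0).2.1 * (famGram (4 : F) * (m 1).2.1 * famGram 4) * (m 2).2.1) := by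
      simp only [hfam, famPart_mul_famPart hG hn1, hn, Matrix.mul_assoc]
    _ = 0 := by rw [hmid, Matrix.mul_zero, Matrix.zero_mul, map_zero]

end CardEqFour

theorem stmt18 (F : Type) [Field F] (G : Type) [Group G] [Fintype G] [DecidableEq G]
    (hp2 : ringChar F ≠ 2) (hp3 : ringChar F ≠ 3)
    (helem : ∀ a : G, a ^ 2 = 1) (hcard : 3 ≤ Fintype.card G)
    (hn : (Fintype.card G : F) = 4) (x : XG G) :
    ∃ φ : TerwilligerAlg F G x →ₐ[F]
        (Matrix (Fin 5) (Fin 5) F × Matrix (Fin 5) (Fin 5) F × F),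
      Function.Surjective φ ∧
      ∃ m : ℕ, 1 ≤ m ∧
        ∀ f : Fin m → TerwilligerAlg F G x,
          (∀ j, φ (f j) = 0) → (List.ofFn f).prod = 0 := by
  have h2 : (2 : F) ≠ 0 := natCast_ne_zero_of_ringChar_ne Nat.prime_two hp2
  have h3 : (3 : F) ≠ 0 := natCast_ne_zero_of_ringChar_ne Nat.prime_three hp3
  have hn1 : (Fintype.card G : F) ≠ 1 := hn.trans_ne (four_ne_one_of_three_ne_zero h3)
  have hrange := range_normalForm helem hn1 x
  obtain ⟨φ, hφ_surj, hφ⟩ := exists_algHom_of_ker_le_ker (normalForm x) (blockMap F) _ hrange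
    (ker_normalForm_le_ker_blockMap h2 h3 helem hcard hn x) (blockMap_surjective h2 h3)
    fun m m' => ⟨_, (normalForm_mul_normalForm helem hn1 x m m').symm, by
      rw [hn, blockMap_mul_blockMap]⟩
  refine ⟨φ, hφ_surj, 3, by norm_num, fun f hf => Subtype.ext ?_⟩
  have hex (j : Fin 3) : ∃ m, normalForm x m = (f j).1 := by
    rw [← LinearMap.mem_range, hrange]
    exact (f j).2
  choose m hm using hex
  have hker (j : Fin 3) : blockMap F (m j) = 0 := (hφ (m j) (f j) (hm j)).symm.trans (hf j)
  simpa [hm, mul_assoc] using normalForm_mul_mul_eq_zero h2 h3 helem hn x hker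
end
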